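/- arXiv:2112.12663 — 10 statements merged into one kernel-verified Lean document; each statement's English description precedes it below -/
import Mathlib

section
/- Let R = ℂ[x₁,…,xₙ], let A be an ℓ×k matrix over R and let S be a syzygy matrix of A (a k×k' matrix over R whose columns generate ker_R A). Then for every point ξ ∈ ℂⁿ at which the rank of the evaluated matrix A(ξ) is maximal (i.e. rank A(ξ) ≥ rank A(η) for all η ∈ ℂⁿ), the null space of A(ξ) equals the column space of S(ξ): ker_ℂ A(ξ) = im_ℂ S(ξ). -/
/-!
The inclusion `im S(ξ) ⊆ ker A(ξ)` holds because `A * S = 0` can be evaluated at `ξ`. For the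
converse, every `v ∈ ker A(ξ)` is lifted to a polynomial syzygy `w` of `A` with `w(ξ) = v`.

Let `r = rank A(ξ)` and choose constant matrices `P`, `Q` with `P * A(ξ) * Q = 1` of size `r`
(`exists_mul_mul_eq_one`). Put `B = P * A * Q`, a square polynomial matrix with `B(ξ) = 1`, and

  `w = det B • v - Q * adj B * P * A * v`.

Then `P * A * w = 0`, and `w(ξ) = v` since `det B(ξ) = 1` and `A(ξ) * v = 0`. Wherever
`det B(η) ≠ 0`, the matrix `P * A(η)` has rank at least `r`, while `A(η)` has rank at most `r` by
maximality, so `P * A(η)` and `A(η)` have the same kernel (`mulVec_eq_zero_of_rank_le`) and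
`A(η) * w(η) = 0`. Hence `det B` times each entry of `A * w` vanishes at every point, so it is the
zero polynomial; as `det B ≠ 0`, it follows that `A * w = 0`.
-/

open MvPolynomial

noncomputable section

/-- A matrix of rank `r` over a field is carried to the identity of size `r` by suitable left and
right factors. -/
lemma exists_mul_mul_eq_one {K : Type*} [Field K] {l k r : ℕ} (M : Matrix (Fin l) (Fin k) K)
    (hr : M.rank = r) :
    ∃ (P : Matrix (Fin r) (Fin l) K) (Q : Matrix (Fin k) (Fin r) K),
      P * M * Q = 1 := by
  let a := M.mulVecLin
  let e : LinearMap.range a ≃ₗ[K] (Fin r → K) :=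
    LinearEquiv.ofFinrankEq _ _ (by rw [Module.finrank_fin_fun]; exact hr)
  obtain ⟨g, hg⟩ := LinearMap.exists_leftInverse_of_injective (LinearMap.range a).subtype
    (Submodule.ker_subtype _)
  obtain ⟨s, hs⟩ := LinearMap.exists_rightInverse_of_surjective a.rangeRestrict
    (LinearMap.range_rangeRestrict a)
  refine ⟨LinearMap.toMatrix' (e.toLinearMap ∘ₗ g), LinearMap.toMatrix' (s ∘ₗ e.symm.toLinearMap),
    ?_⟩
  have hM : M = LinearMap.toMatrix' a := (LinearMap.toMatrix'_toLin' M).symm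
  rw [hM, ← LinearMap.toMatrix'_comp, ← LinearMap.toMatrix'_comp, ← LinearMap.toMatrix'_id]
  congr 1
  refine LinearMap.ext fun x => ?_
  have h1 : a.rangeRestrict (s (e.symm x)) = e.symm x := LinearMap.congr_fun hs _
  have h2 : a (s (e.symm x)) = (LinearMap.range a).subtype (e.symm x) := congrArg Subtype.val h1
  have h3 : g ((LinearMap.range a).subtype (e.symm x)) = e.symm x := LinearMap.congr_fun hg _
  simp only [LinearMap.comp_apply, LinearEquiv.coe_coe, LinearMap.id_apply]
  rw [h2, h3, e.apply_symm_apply]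

/-- If `P * M * Q` is invertible of size at least the rank of `M`, then `P` is injective on the
column space of `M`. -/
lemma mulVec_eq_zero_of_rank_le {K : Type*} [Field K] {l k r : ℕ}
    (M : Matrix (Fin l) (Fin k) K) (P : Matrix (Fin r) (Fin l) K) (Q : Matrix (Fin k) (Fin r) K)
    (hd : (P * M * Q).det ≠ 0) (hr : M.rank ≤ r) (w : Fin k → K)
    (hw : (P * M).mulVec w = 0) : M.mulVec w = 0 := by
  have h1 : r ≤ (P * M).rank := by
    have h := Matrix.rank_mul_le_left (P * M) Q
    rw [Matrix.rank_of_isUnit _ ((Matrix.isUnit_iff_isUnit_det _).2 hd.isUnit)] at h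
    simpa using h
  have hle : LinearMap.ker M.mulVecLin ≤ LinearMap.ker (P * M).mulVecLin := by
    intro x hx
    simp only [LinearMap.mem_ker, Matrix.mulVecLin_apply] at hx ⊢
    rw [← Matrix.mulVec_mulVec, hx, Matrix.mulVec_zero]
  have e1 := LinearMap.finrank_range_add_finrank_ker M.mulVecLin
  have e2 := LinearMap.finrank_range_add_finrank_ker (P * M).mulVecLin
  unfold Matrix.rank at h1 hr
  have heq := Submodule.eq_of_le_of_finrank_le hle (by omega)
  have : w ∈ LinearMap.ker M.mulVecLin := by
    rw [heq]; simpa using hw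
  simpa using this

lemma ringHom_comp_mulVec {R T : Type*} [CommRing R] [CommRing T] (f : R →+* T) {a b : ℕ}
    (M : Matrix (Fin a) (Fin b) R) (x : Fin b → R) :
    f ∘ M.mulVec x = (M.map f).mulVec (f ∘ x) := by
  funext i
  exact RingHom.map_mulVec f M x i

/-- Every vector in the kernel of `A` at a point of maximal rank is the value there of a polynomial
syzygy of `A`. -/
lemma exists_syzygy_eval_eq {n l k : ℕ}
    (A : Matrix (Fin l) (Fin k) (MvPolynomial (Fin n) ℂ)) (ξ : Fin n → ℂ)
    (hξ : ∀ η : Fin n → ℂ, (A.map (eval η)).rank ≤ (A.map (eval ξ)).rank)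
    (v : Fin k → ℂ) (hv : (A.map (eval ξ)).mulVec v = 0) :
    ∃ w : Fin k → MvPolynomial (Fin n) ℂ, A.mulVec w = 0 ∧ eval ξ ∘ w = v := by
  obtain ⟨r, hr⟩ : ∃ r, (A.map (eval ξ)).rank = r := ⟨_, rfl⟩
  obtain ⟨P, Q, hPQ⟩ := exists_mul_mul_eq_one (A.map (eval ξ)) hr
  rw [hr] at hξ
  obtain ⟨P', hP'⟩ : ∃ P' : Matrix (Fin r) (Fin l) (MvPolynomial (Fin n) ℂ), P' = P.map C :=
    ⟨_, rfl⟩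
  obtain ⟨Q', hQ'⟩ : ∃ Q' : Matrix (Fin k) (Fin r) (MvPolynomial (Fin n) ℂ), Q' = Q.map C :=
    ⟨_, rfl⟩
  obtain ⟨v', hv'C⟩ : ∃ v' : Fin k → MvPolynomial (Fin n) ℂ, v' = C ∘ v := ⟨_, rfl⟩
  obtain ⟨B, hBdef⟩ : ∃ B, B = P' * A * Q' := ⟨_, rfl⟩
  have hP (η : Fin n → ℂ) : P'.map (eval η) = P := by ext; simp [hP']
  have hQ (η : Fin n → ℂ) : Q'.map (eval η) = Q := by ext; simp [hQ']
  have hv' (η : Fin n → ℂ) : eval η ∘ v' = v := by ext; simp [hv'C]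
  have hB (η : Fin n → ℂ) : B.map (eval η) = P * A.map (eval η) * Q := by
    simp only [hBdef, Matrix.map_mul, hP, hQ]
  have hdet (η : Fin n → ℂ) : eval η B.det = (P * A.map (eval η) * Q).det := by
    rw [RingHom.map_det, RingHom.mapMatrix_apply, hB]
  have hd1 : eval ξ B.det = 1 := by rw [hdet, hPQ, Matrix.det_one]
  obtain ⟨w, hwdef⟩ : ∃ w, w = B.det • v' - (Q' * B.adjugate).mulVec ((P' * A).mulVec v') :=
    ⟨_, rfl⟩
  have hPAw : (P' * A).mulVec w = 0 := by
    simp only [hwdef, Matrix.mulVec_sub, Matrix.mulVec_smul]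
    rw [Matrix.mulVec_mulVec _ (P' * A) (Q' * B.adjugate), ← Matrix.mul_assoc,
      ← hBdef, Matrix.mul_adjugate, Matrix.smul_mulVec, Matrix.one_mulVec, sub_self]
  refine ⟨w, ?_, ?_⟩
  · have hd0 : B.det ≠ 0 := fun h => by simp [h] at hd1
    funext i
    refine (mul_eq_zero.1 (?_ : B.det * A.mulVec w i = 0)).resolve_left hd0
    refine MvPolynomial.funext fun η => ?_
    rw [map_mul, map_zero, mul_eq_zero]
    refine or_iff_not_imp_left.2 fun hη => ?_
    have h0 : (P * A.map (eval η)).mulVec (eval η ∘ w) = 0 := by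
      rw [← hP η, ← Matrix.map_mul, ← ringHom_comp_mulVec, hPAw]
      ext; simp
    have := mulVec_eq_zero_of_rank_le (A.map (eval η)) P Q (hdet η ▸ hη) (hξ η) _ h0
    rw [← ringHom_comp_mulVec] at this
    exact congrFun this i
  · have h0 : eval ξ ∘ (Q' * B.adjugate).mulVec ((P' * A).mulVec v') = 0 := by
      rw [ringHom_comp_mulVec, ringHom_comp_mulVec, hv', Matrix.map_mul (L := P') (M := A),
        ← Matrix.mulVec_mulVec _ (P'.map (eval ξ)), hv,
        Matrix.mulVec_zero, Matrix.mulVec_zero]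
    funext i
    have h0i := congrFun h0 i
    have hvi := congrFun (hv' ξ) i
    simp only [Function.comp_apply, Pi.zero_apply] at h0i hvi
    simp only [hwdef, Function.comp_apply, Pi.sub_apply, Pi.smul_apply, smul_eq_mul, map_sub, map_mul,
      hd1, h0i, hvi, one_mul, sub_zero]

/-- If `S` is a syzygy matrix of the polynomial matrix `A`
(its columns generate `ker_R A` over `R = ℂ[x₁,…,xₙ]`), then at every point
`ξ ∈ ℂⁿ` where the rank of `A(ξ)` is maximal, `ker_ℂ A(ξ) = im_ℂ S(ξ)`. -/
theorem pointwise_exactness_at_maximal_rank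
    {n l k k' : ℕ} (hn : 0 < n)
    (A : Matrix (Fin l) (Fin k) (MvPolynomial (Fin n) ℂ))
    (S : Matrix (Fin k) (Fin k') (MvPolynomial (Fin n) ℂ))
    (hS : LinearMap.range S.mulVecLin = LinearMap.ker A.mulVecLin)
    (ξ : Fin n → ℂ)
    (hξ : ∀ η : Fin n → ℂ, (A.map (eval η)).rank ≤ (A.map (eval ξ)).rank) :
    LinearMap.ker ((A.map (eval ξ)).mulVecLin)
      = LinearMap.range ((S.map (eval ξ)).mulVecLin) := by
  apply le_antisymm
  · intro v hv
    obtain ⟨w, hw, rfl⟩ := exists_syzygy_eval_eq A ξ hξ v (by simpa using hv)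
    have hwS : w ∈ LinearMap.range S.mulVecLin := by rw [hS]; simpa using hw
    obtain ⟨u, rfl⟩ := hwS
    exact ⟨eval ξ ∘ u, (ringHom_comp_mulVec (eval ξ) S u).symm⟩
  · have hAS : A * S = 0 := by
      refine Matrix.ext_of_mulVec_single fun j => ?_
      have : S.mulVec (Pi.single j 1) ∈ LinearMap.ker A.mulVecLin := by
        rw [← hS]; exact ⟨_, rfl⟩
      rw [← Matrix.mulVec_mulVec, Matrix.zero_mulVec]
      simpa only [LinearMap.mem_ker, Matrix.mulVecLin_apply] using this
    rintro _ ⟨u, rfl⟩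
    rw [LinearMap.mem_ker, Matrix.mulVecLin_apply, Matrix.mulVecLin_apply, Matrix.mulVec_mulVec,
      ← Matrix.map_mul, hAS, Matrix.map_zero _ (map_zero _), Matrix.zero_mulVec]
end
end

section
/- Let R = ℂ[x₁,…,xₙ], let A be an ℓ×k matrix over R and let S be a syzygy matrix of A (a k×k' matrix over R whose columns generate ker_R A). Then for every point ξ ∈ ℂⁿ at which the rank of A(ξ) is NOT maximal (i.e. rank A(ξ) < rank A(η) for some η ∈ ℂⁿ), the column space of S(ξ) is a proper subspace of the null space of A(ξ): im_ℂ S(ξ) ⊊ ker_ℂ A(ξ). -/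
/-!
Rank is lower semicontinuous in the Zariski topology: off the zero locus of a suitable
nonzero polynomial, the rank of a polynomial matrix is at least its rank at a given point
(`exists_poly_rank_le`). As a product of two nonzero polynomials is nonzero and `ℂ` is infinite,
for any `ξ`, `η` some point `ζ` satisfies both `rank S(ξ) ≤ rank S(ζ)` and
`rank A(η) ≤ rank A(ζ)`. Since `A(ζ) S(ζ) = 0`, it follows that
`rank S(ξ) + rank A(η) ≤ k`. If `rank A(ξ) < rank A(η)`, this gives
`rank S(ξ) < k - rank A(ξ) = dim ker A(ξ)`, so the inclusion `im S(ξ) ⊆ ker A(ξ)` is strict.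
-/

open MvPolynomial

noncomputable section

/-- A matrix of rank `r` over a field is turned into the `r × r` identity by multiplication by
suitable matrices on both sides. -/
lemma exists_mul_mul_eq_one_of_rank {K : Type*} [Field K] {l k : ℕ}
    (M : Matrix (Fin l) (Fin k) K) :
    ∃ (P : Matrix (Fin M.rank) (Fin l) K) (Q : Matrix (Fin k) (Fin M.rank) K),
      P * M * Q = 1 := by
  let f := Matrix.toLin' M
  let e : LinearMap.range f ≃ₗ[K] (Fin M.rank → K) :=
    (Module.finBasisOfFinrankEq K (LinearMap.range f) rfl).equivFun
  obtain ⟨p, hp⟩ := LinearMap.exists_extend (e : LinearMap.range f →ₗ[K] (Fin M.rank → K))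
  obtain ⟨h, hh⟩ := f.rangeRestrict.exists_rightInverse_of_surjective f.range_rangeRestrict
  refine ⟨LinearMap.toMatrix' p, LinearMap.toMatrix' (h ∘ₗ e.symm), ?_⟩
  have hM : M = LinearMap.toMatrix' f := (LinearMap.toMatrix'_toLin' M).symm
  have key : p ∘ₗ f ∘ₗ (h ∘ₗ (e.symm : (Fin M.rank → K) →ₗ[K] LinearMap.range f))
      = LinearMap.id := by
    ext1 i
    ext1
    have h1 : ∀ x, f (h x) = (x : Fin l → K) := fun x =>
      congrArg Subtype.val (LinearMap.congr_fun hh x)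
    have h2 : ∀ x : LinearMap.range f, p x = e x := fun x => LinearMap.congr_fun hp x
    simp [h1, h2]
  calc _ = LinearMap.toMatrix' p * LinearMap.toMatrix' f *
          LinearMap.toMatrix' (h ∘ₗ (e.symm : (Fin M.rank → K) →ₗ[K] LinearMap.range f)) := by
        rw [← hM]
    _ = 1 := by
        rw [Matrix.mul_assoc, ← LinearMap.toMatrix'_comp, ← LinearMap.toMatrix'_comp, key,
          LinearMap.toMatrix'_id]

/-- Zariski lower semicontinuity of the rank: the points at which the rank of the evaluated
matrix is at least its rank at `η` contain a nonempty basic open set. -/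
lemma exists_poly_rank_le {n l k : ℕ} (A : Matrix (Fin l) (Fin k) (MvPolynomial (Fin n) ℂ))
    (η : Fin n → ℂ) :
    ∃ q : MvPolynomial (Fin n) ℂ, q ≠ 0 ∧
      ∀ ζ, eval ζ q ≠ 0 → (A.map (eval η)).rank ≤ (A.map (eval ζ)).rank := by
  obtain ⟨P, Q, h⟩ := exists_mul_mul_eq_one_of_rank (A.map (eval η))
  let D : Matrix (Fin (A.map (eval η)).rank) (Fin (A.map (eval η)).rank) (MvPolynomial (Fin n) ℂ) :=
    P.map (C : ℂ →+* MvPolynomial (Fin n) ℂ) * A * Q.map (C : ℂ →+* MvPolynomial (Fin n) ℂ)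
  have hq : ∀ ζ, eval ζ D.det = (P * A.map (eval ζ) * Q).det := by
    intro ζ
    rw [RingHom.map_det, RingHom.mapMatrix_apply, Matrix.map_mul, Matrix.map_mul]
    congr 3
    · ext; simp
    · ext; simp
  refine ⟨D.det, ?_, ?_⟩
  · intro h0
    have := hq η
    rw [h0, h, Matrix.det_one] at this
    simp at this
  · intro ζ hζ
    rw [hq] at hζ
    have h1 := Matrix.rank_of_det_ne_zero hζ
    rw [Fintype.card_fin] at h1
    calc _ = _ := h1.symm
      _ ≤ (P * A.map (eval ζ)).rank := Matrix.rank_mul_le_left _ _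
      _ ≤ _ := Matrix.rank_mul_le_right _ _

/-- If `S` is a syzygy matrix of the polynomial matrix `A`
(its columns generate `ker_R A` over `R = ℂ[x₁,…,xₙ]`), then at every point
`ξ ∈ ℂⁿ` where the rank of `A(ξ)` is NOT maximal, the column space of `S(ξ)`
is a proper subspace of the null space of `A(ξ)`: `im_ℂ S(ξ) ⊊ ker_ℂ A(ξ)`. -/
theorem pointwise_strict_inclusion_at_nonmaximal_rank
    {n l k k' : ℕ} (hn : 0 < n)
    (A : Matrix (Fin l) (Fin k) (MvPolynomial (Fin n) ℂ))
    (S : Matrix (Fin k) (Fin k') (MvPolynomial (Fin n) ℂ))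
    (hS : LinearMap.range S.mulVecLin = LinearMap.ker A.mulVecLin)
    (ξ : Fin n → ℂ)
    (hξ : ∃ η : Fin n → ℂ, (A.map (eval ξ)).rank < (A.map (eval η)).rank) :
    LinearMap.range ((S.map (eval ξ)).mulVecLin)
      < LinearMap.ker ((A.map (eval ξ)).mulVecLin) := by
  obtain ⟨η, hη⟩ := hξ
  have hAS : A * S = 0 := by
    apply Matrix.ext_of_mulVec_single
    intro j
    have : S.mulVecLin (Pi.single j 1) ∈ LinearMap.ker A.mulVecLin := hS ▸ ⟨_, rfl⟩
    rw [LinearMap.mem_ker, Matrix.mulVecLin_apply, Matrix.mulVecLin_apply,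
      Matrix.mulVec_mulVec] at this
    rw [this, Matrix.zero_mulVec]
  have hpt : ∀ ζ : Fin n → ℂ, A.map (eval ζ) * S.map (eval ζ) = 0 := by
    intro ζ
    rw [← Matrix.map_mul, hAS]
    ext; simp
  obtain ⟨q₁, h₁, H₁⟩ := exists_poly_rank_le A η
  obtain ⟨q₂, h₂, H₂⟩ := exists_poly_rank_le S ξ
  obtain ⟨ζ, hζ⟩ : ∃ ζ, eval ζ (q₁ * q₂) ≠ 0 := by
    by_contra! hc
    exact mul_ne_zero h₁ h₂ (MvPolynomial.funext fun x => by simpa using hc x)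
  rw [map_mul] at hζ
  have hA := H₁ ζ (left_ne_zero_of_mul hζ)
  have hB := H₂ ζ (right_ne_zero_of_mul hζ)
  have hsum := Matrix.rank_add_rank_le_card_of_mul_eq_zero (hpt ζ)
  rw [Fintype.card_fin] at hsum
  have hle : LinearMap.range ((S.map (eval ξ)).mulVecLin)
      ≤ LinearMap.ker ((A.map (eval ξ)).mulVecLin) := by
    rintro _ ⟨v, rfl⟩
    simp [Matrix.mulVec_mulVec, hpt ξ]
  refine lt_of_le_of_ne hle fun heq => ?_
  have hrn := LinearMap.finrank_range_add_finrank_ker (A.map (eval ξ)).mulVecLin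
  rw [← heq, Module.finrank_fin_fun] at hrn
  change (A.map (eval ξ)).rank + (S.map (eval ξ)).rank = k at hrn
  omega
end
end

section
/- Let R = ℂ[x₁,…,xₙ], let A be an ℓ×k matrix over R, and let M = R^k/im_R A^⊤, where im_R A^⊤ is the submodule of R^k generated by the rows of A. If P is an associated prime of M with P ≠ (0), then no point ξ ∈ ℂⁿ at which rank A(ξ) is maximal lies in V(P); that is, {ξ ∈ ℂⁿ : rank A(ξ) is maximal} ∩ V(P) = ∅. -/
/-!
Let `r` be the maximal rank, attained at `ξ`, and choose an `r × r` submatrix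
`B = A.submatrix f g` whose determinant `d` does not vanish at `ξ`. Every larger minor vanishes at
all points, so the Schur complement of `B` vanishes identically, which over the domain `R` reads
`d • A = A.submatrix id g * adj B * A.submatrix f id` (`det_smul_eq_of_forall_rank_le`).
Consequently an element of the row module `N` whose coordinates in the columns `g` vanish is zero.

Now write `P` as the annihilator of the class of `m`, and pick `0 ≠ p ∈ P`, so `p • m ∈ N`.
By Cramer's rule, subtracting from `d • m` the combination of the rows `f` with coefficients
`(m ∘ g) ᵥ* adj B` gives a vector `w` vanishing in the columns `g`. Then `p • w` lies in `N` and
vanishes in the columns `g`, so `p • w = 0`, hence `w = 0` and `d • m ∈ N`. Thus `d ∈ P` while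
`d(ξ) ≠ 0`.
-/

open MvPolynomial

noncomputable section

namespace Matrix

theorem exists_det_submatrix_ne_zero {K : Type*} [Field K] {l k : ℕ}
    (A : Matrix (Fin l) (Fin k) K) :
    ∃ (f : Fin A.rank → Fin l) (g : Fin A.rank → Fin k), (A.submatrix f g).det ≠ 0 := by
  -- independent rows of any matrix, as many as its rank
  have key : ∀ {a b : ℕ} (r : ℕ) (M : Matrix (Fin a) (Fin b) K), M.rank = r →
      ∃ f : Fin r → Fin a, LinearIndependent K (M.submatrix f id).row := by
    rintro a b r M rfl
    rw [rank_eq_finrank_span_row]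
    obtain ⟨v, hv, -, hli⟩ := Submodule.exists_fun_fin_finrank_span_eq K (Set.range M.row)
    choose f hf using hv
    refine ⟨f, ?_⟩
    have : (M.submatrix f id).row = v := funext hf
    rwa [this]
  obtain ⟨f, hf⟩ := key _ A rfl
  obtain ⟨g, hg⟩ := key A.rank (A.submatrix f id)ᵀ (by
    rw [rank_transpose, hf.rank_matrix, Fintype.card_fin])
  refine ⟨f, g, ?_⟩
  have h := linearIndependent_rows_iff_isUnit.1 hg
  rw [isUnit_iff_isUnit_det, ← det_transpose] at h
  exact h.ne_zero

/-- If an `r × r` submatrix is invertible and the rank is at most `r`, then the Schur complement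
of the submatrix vanishes; the equation is cleared of denominators. -/
theorem det_smul_eq_of_rank_le {K : Type*} [Field K] {l k r : ℕ}
    (A : Matrix (Fin l) (Fin k) K) (hA : A.rank ≤ r) (f : Fin r → Fin l) (g : Fin r → Fin k)
    (hd : (A.submatrix f g).det ≠ 0) :
    (A.submatrix f g).det • A
      = A.submatrix id g * (A.submatrix f g).adjugate * A.submatrix f id := by
  ext i j
  have hu : IsUnit (A.submatrix f g).det := hd.isUnit
  let _ := invertibleOfIsUnitDet _ hu
  set F := A.submatrix (Sum.elim f fun _ : Unit => i) (Sum.elim g fun _ : Unit => j) with hF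
  have h0 : F.det = 0 := by
    by_contra h
    have h1 := rank_of_det_ne_zero h
    have h2 : F.rank ≤ A.rank := rank_submatrix_le _ _ _
    simp only [Fintype.card_sum, Fintype.card_fin, Fintype.card_unit] at h1
    omega
  have hb : F = fromBlocks (A.submatrix f g) (A.submatrix f fun _ => j)
      (A.submatrix (fun _ => i) g) (A.submatrix (fun _ => i) fun _ => j) := by
    ext (a | a) (b | b) <;> rfl
  rw [hb, det_fromBlocks₁₁, mul_eq_zero, or_iff_right hd, det_unique, sub_apply, sub_eq_zero,
    invOf_eq_nonsing_inv, inv_def, Ring.inverse_eq_inv', Matrix.mul_smul, Matrix.smul_mul] at h0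
  have h1 : A i j = (A.submatrix f g).det⁻¹ *
      (A.submatrix id g * (A.submatrix f g).adjugate * A.submatrix f id) i j := h0
  rw [smul_apply, smul_eq_mul, h1, mul_inv_cancel_left₀ hd]

/-- The Schur complement identity for a polynomial matrix with all specializations of rank at
most `r` and a nonzero `r × r` minor. -/
theorem det_smul_eq_of_forall_rank_le {n l k r : ℕ}
    (A : Matrix (Fin l) (Fin k) (MvPolynomial (Fin n) ℂ))
    (hA : ∀ η : Fin n → ℂ, (A.map (eval η)).rank ≤ r) (f : Fin r → Fin l) (g : Fin r → Fin k)
    (hd : (A.submatrix f g).det ≠ 0) :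
    (A.submatrix f g).det • A
      = A.submatrix id g * (A.submatrix f g).adjugate * A.submatrix f id := by
  ext1 i j
  -- the identity is checked at the points where the minor is nonzero; multiplying by the minor
  -- takes care of the other points
  refine mul_left_cancel₀ hd (MvPolynomial.funext fun η => ?_)
  have hdet : eval η (A.submatrix f g).det = ((A.map (eval η)).submatrix f g).det := by
    rw [RingHom.map_det]; rfl
  rw [map_mul, map_mul]
  by_cases h : eval η (A.submatrix f g).det = 0
  · rw [h, zero_mul, zero_mul]
  congr 1
  have key := det_smul_eq_of_rank_le (A.map (eval η)) (hA η) f g (hdet ▸ h)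
  have hadj : ((A.map (eval η)).submatrix f g).adjugate
      = (A.submatrix f g).adjugate.map (eval η) :=
    ((eval η).map_adjugate (A.submatrix f g)).symm
  rw [hadj, ← hdet] at key
  have e := congrFun (congrFun key i) j
  rw [smul_apply, smul_eq_mul, map_mul]
  refine Eq.trans e ?_
  change ((A.submatrix id g).map (eval η) * (A.submatrix f g).adjugate.map (eval η) *
    (A.submatrix f id).map (eval η) : Matrix (Fin l) (Fin k) ℂ) i j = _
  rw [← Matrix.map_mul, ← Matrix.map_mul]
  rfl

end Matrix

/-- Let `M = R^k / im_R A^⊤`, where `im_R A^⊤` is the submodule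
of `R^k` generated by the rows of `A`, over `R = ℂ[x₁,…,xₙ]`. If `P` is a nonzero
associated prime of `M`, then no point `ξ ∈ ℂⁿ` at which `rank A(ξ)` is maximal
lies in `V(P)`. -/
theorem maximal_rank_points_avoid_variety_of_nonzero_associated_prime
    {n l k : ℕ} (hn : 0 < n)
    (A : Matrix (Fin l) (Fin k) (MvPolynomial (Fin n) ℂ))
    (P : Ideal (MvPolynomial (Fin n) ℂ))
    (hP : P ∈ associatedPrimes (MvPolynomial (Fin n) ℂ)
      ((Fin k → MvPolynomial (Fin n) ℂ) ⧸
        Submodule.span (MvPolynomial (Fin n) ℂ) (Set.range (fun i j => A i j))))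
    (hP0 : P ≠ ⊥)
    (ξ : Fin n → ℂ)
    (hξ : ∀ η : Fin n → ℂ, (A.map (eval η)).rank ≤ (A.map (eval ξ)).rank) :
    ¬ (∀ f ∈ P, eval ξ f = 0) := by
  intro hV
  set N := Submodule.span (MvPolynomial (Fin n) ℂ) (Set.range (fun i j => A i j)) with hN
  have hmem : ∀ v, v ∈ N ↔ ∃ c, Matrix.vecMul c A = v := by
    intro v
    change v ∈ Submodule.span _ (Set.range A.row) ↔ ∃ c, A.vecMulLinear c = v
    rw [← LinearMap.mem_range, range_vecMulLinear]
  obtain ⟨-, x, hx⟩ := isAssociatedPrime_iff.1 hP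
  obtain ⟨m, rfl⟩ := Submodule.mkQ_surjective N x
  have hPm : ∀ q, q ∈ P ↔ q • m ∈ N := by
    intro q
    rw [hx, Submodule.mem_colon_singleton, Submodule.mem_bot, ← map_smul, Submodule.mkQ_apply,
      Submodule.Quotient.mk_eq_zero]
  obtain ⟨f, g, hfg⟩ := (A.map (eval ξ)).exists_det_submatrix_ne_zero
  set d := (A.submatrix f g).det with hd
  have hdξ : eval ξ d ≠ 0 := by
    rw [hd, RingHom.map_det]; exact hfg
  have hd0 : d ≠ 0 := fun h => hdξ (by rw [h, map_zero])
  have hS := A.det_smul_eq_of_forall_rank_le hξ f g hd0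
  have hzero : ∀ v ∈ N, v ∘ g = 0 → v = 0 := by
    intro v hv hvg
    obtain ⟨c, rfl⟩ := (hmem v).1 hv
    have h1 : Matrix.vecMul c (A.submatrix id g) = 0 := hvg
    have h2 : d • Matrix.vecMul c A = 0 := by
      rw [← Matrix.vecMul_smul, hS, ← Matrix.vecMul_vecMul, ← Matrix.vecMul_vecMul, h1,
        Matrix.zero_vecMul, Matrix.zero_vecMul]
    exact (smul_eq_zero.1 h2).resolve_left hd0
  obtain ⟨p, hp, hp0⟩ := Submodule.exists_mem_ne_zero_of_ne_bot hP0
  set u := Matrix.vecMul (Matrix.vecMul (m ∘ g) (A.submatrix f g).adjugate) (A.submatrix f id)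
    with hu
  have huN : u ∈ N := by
    rw [hu, Matrix.vecMul_eq_sum]
    exact Submodule.sum_mem _ fun i _ =>
      Submodule.smul_mem _ _ (Submodule.subset_span ⟨f i, rfl⟩)
  have hug : u ∘ g = d • (m ∘ g) := by
    change Matrix.vecMul (Matrix.vecMul (m ∘ g) (A.submatrix f g).adjugate) (A.submatrix f g) = _
    rw [Matrix.vecMul_vecMul, Matrix.adjugate_mul, Matrix.vecMul_smul, Matrix.vecMul_one]
  have hw : p • (d • m - u) = 0 := by
    apply hzero
    · rw [smul_sub, smul_comm]
      exact N.sub_mem (N.smul_mem d ((hPm p).1 hp)) (N.smul_mem p huN)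
    · have h : (d • m - u) ∘ g = 0 := by
        change d • (m ∘ g) - u ∘ g = 0
        rw [hug, sub_self]
      change p • ((d • m - u) ∘ g) = 0
      rw [h, smul_zero]
  have hdm : d • m = u := sub_eq_zero.1 ((smul_eq_zero.1 hw).resolve_left hp0)
  exact hdξ (hV d ((hPm d).2 (hdm ▸ huN)))
end
end

section
/- Let R = ℂ[x₁,…,xₙ], let A be a row-homogeneous ℓ×k matrix over R of ℝ-constant rank (there is an integer r with rank A(ξ) = r for all ξ ∈ ℝⁿ∖{0}), and let (A_c, A_u) be a controllable–uncontrollable decomposition of A. Then A_u is ℝ-elliptic: for every ξ ∈ ℝⁿ∖{0}, ker_ℂ A_u(ξ) = {0}. -/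
/-!
Let `ξ ≠ 0` be a real point, `𝔪` the maximal ideal of `R = ℂ[x₁,…,xₙ]` at `ξ`, and `r` the constant
rank of `A`. Nonzero real points are Zariski dense, so the rank of `A` over `Frac R` is at most `r`
(`rank_map_algebraMap_le`); on the other hand some `r × r` minor `f` of `A` is nonzero at `ξ`.
Hence `R^k / im Aᵀ` is torsion free after inverting `f`: by Cramer's rule, `g • v ∈ im Aᵀ` with
`g ≠ 0` forces `f • v ∈ im Aᵀ` (`minor_smul_mem`). So the only prime contained in `𝔪` that can be
associated to `R^k / im Aᵀ` is `(0)`.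

If the annihilator of `R^k / im A_uᵀ` were contained in `𝔪`, a minimal prime over it inside `𝔪`
would be associated to `R^k / im A_uᵀ`, hence to `R^k / im Aᵀ`, hence would be `(0)`, which is
excluded. So some `s` with `s(ξ) ≠ 0` satisfies `s • R^k ⊆ im A_uᵀ`; evaluating at `ξ`, the rows of
`A_u(ξ)` span `ℂ^k`.
-/

open MvPolynomial

noncomputable section

theorem exists_rows_rank_eq {K : Type*} [Field K] {l k : ℕ} (A : Matrix (Fin l) (Fin k) K) :
    ∃ f : Fin A.rank → Fin l, (A.submatrix f id).rank = A.rank := by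
  have h := Submodule.exists_fun_fin_finrank_span_eq K (Set.range A.row)
  rw [← A.rank_eq_finrank_span_row] at h
  obtain ⟨f, hf, -, hli⟩ := h
  choose g hg using hf
  refine ⟨g, ?_⟩
  have : (A.submatrix g id).row = f := by
    funext i
    exact hg i
  rw [← this] at hli
  simpa using hli.rank_matrix

theorem exists_minor_ne_zero {K : Type*} [Field K] {l k : ℕ} (A : Matrix (Fin l) (Fin k) K) :
    ∃ (f : Fin A.rank → Fin l) (g : Fin A.rank → Fin k), (A.submatrix f g).det ≠ 0 := by
  obtain ⟨f, hf⟩ := exists_rows_rank_eq A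
  have h := exists_rows_rank_eq (A.submatrix f id).transpose
  rw [Matrix.rank_transpose, hf] at h
  obtain ⟨g, hg⟩ := h
  refine ⟨f, g, ?_⟩
  have hg' : (A.submatrix f g).rank = A.rank := by
    rw [← Matrix.rank_transpose]
    exact hg
  rw [← isUnit_iff_ne_zero, ← Matrix.isUnit_iff_isUnit_det,
    ← Matrix.linearIndependent_rows_iff_isUnit, linearIndependent_iff_card_eq_finrank_span]
  rw [Matrix.rank_eq_finrank_span_row] at hg'
  rw [Fintype.card_fin]
  exact hg'.symm

/-- Nonzero real points are Zariski dense: a nonzero polynomial is nonzero at one of them. -/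
theorem exists_real_eval_ne_zero {n : ℕ} (hn : 0 < n) (q : MvPolynomial (Fin n) ℂ) (hq : q ≠ 0) :
    ∃ ξ : Fin n → ℝ, ξ ≠ 0 ∧ eval (fun i => (ξ i : ℂ)) q ≠ 0 := by
  by_contra! h
  apply mul_ne_zero hq (X_ne_zero (R := ℂ) (⟨0, hn⟩ : Fin n))
  refine funext_set (fun _ => Set.range ((↑) : ℝ → ℂ))
    (fun _ => Set.infinite_range_of_injective Complex.ofReal_injective) fun x hx => ?_
  choose ξ hξ using fun i => hx i trivial
  obtain rfl : (fun i => (ξ i : ℂ)) = x := funext hξ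
  by_cases h0 : ξ = 0
  · simp [h0]
  · simp [h ξ h0]

theorem rank_map_algebraMap_le {n l k r : ℕ} (hn : 0 < n)
    (A : Matrix (Fin l) (Fin k) (MvPolynomial (Fin n) ℂ))
    (hr : ∀ ξ : Fin n → ℝ, ξ ≠ 0 → (A.map (eval (fun i => (ξ i : ℂ)))).rank = r) :
    (A.map (algebraMap _ (FractionRing (MvPolynomial (Fin n) ℂ)))).rank ≤ r := by
  obtain ⟨f, g, hfg⟩ :=
    exists_minor_ne_zero (A.map (algebraMap _ (FractionRing (MvPolynomial (Fin n) ℂ))))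
  rw [Matrix.submatrix_map, ← RingHom.mapMatrix_apply, ← RingHom.map_det] at hfg
  have hq : (A.submatrix f g).det ≠ 0 := fun h => hfg (by rw [h, map_zero])
  obtain ⟨ξ, hξ, he⟩ := exists_real_eval_ne_zero hn _ hq
  rw [RingHom.map_det, RingHom.mapMatrix_apply, ← Matrix.submatrix_map] at he
  have h1 := Matrix.rank_of_det_ne_zero he
  have h2 := Matrix.rank_submatrix_le (A.map (eval (fun i => (ξ i : ℂ)))) f g
  rw [hr ξ hξ, h1] at h2
  simpa using h2

/-- If `A` has rank at most `r` over the fraction field, every nonzero `r × r` minor of `A` kills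
the torsion of the cokernel of `Aᵀ`. -/
theorem minor_smul_mem {R : Type*} [CommRing R] [IsDomain R] {l k r : ℕ}
    (A : Matrix (Fin l) (Fin k) R) (hr : (A.map (algebraMap R (FractionRing R))).rank ≤ r)
    (f : Fin r → Fin l) (g : Fin r → Fin k) (hf : (A.submatrix f g).det ≠ 0)
    (c : R) (hc : c ≠ 0) (v : Fin k → R)
    (hv : c • v ∈ Submodule.span R (Set.range fun i j => A i j)) :
    (A.submatrix f g).det • v ∈ Submodule.span R (Set.range fun i j => A i j) := by
  set N := Submodule.span R (Set.range fun i j => A i j) with hN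
  set B := A.submatrix f g with hB
  let φ : (Fin k → R) →ₗ[R] (Fin k → FractionRing R) :=
    (Algebra.linearMap R (FractionRing R)).compLeft (Fin k)
  have hφ : ∀ w j, φ w j = algebraMap R (FractionRing R) (w j) := fun _ _ => rfl
  have hinj : Function.Injective (algebraMap R (FractionRing R)) := IsFractionRing.injective _ _
  have hdet : (B.map (algebraMap R (FractionRing R))).det ≠ 0 := by
    rw [← RingHom.mapMatrix_apply, ← RingHom.map_det]
    exact fun h => hf (hinj (by rw [h, map_zero]))
  -- the rows selected by `f` are a basis of the row space over the fraction field
  have hli : LinearIndependent (FractionRing R) (fun a => φ (A (f a))) := by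
    have h := (Matrix.linearIndependent_rows_iff_isUnit
      (A := B.map (algebraMap R (FractionRing R)))).2
      ((Matrix.isUnit_iff_isUnit_det _).2 hdet.isUnit)
    exact LinearIndependent.of_comp (LinearMap.funLeft (FractionRing R) (FractionRing R) g) h
  have hspan : Submodule.span (FractionRing R) (Set.range fun a => φ (A (f a)))
      = Submodule.span (FractionRing R) (Set.range fun i => φ (A i)) := by
    apply Submodule.eq_of_le_of_finrank_le
    · apply Submodule.span_mono
      rintro _ ⟨a, rfl⟩
      exact ⟨f a, rfl⟩
    · rw [finrank_span_eq_card hli, Fintype.card_fin]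
      rw [Matrix.rank_eq_finrank_span_row] at hr
      exact hr
  have hmem : ∀ w ∈ N, φ w ∈ Submodule.span (FractionRing R) (Set.range fun a => φ (A (f a))) := by
    rw [hspan]
    intro w hw
    induction hw using Submodule.span_induction with
    | mem x hx =>
      obtain ⟨i, rfl⟩ := hx
      exact Submodule.subset_span ⟨i, rfl⟩
    | zero => simp
    | add x y _ _ hx hy => rw [map_add]; exact add_mem hx hy
    | smul a x _ hx =>
      rw [map_smul, ← algebraMap_smul (FractionRing R) a (φ x)]
      exact Submodule.smul_mem _ _ hx
  -- Cramer's rule gives the coefficients of `B.det • v` on the selected rows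
  let t : Fin r → R := Matrix.vecMul (v ∘ g) B.adjugate
  have hu : ∑ a, t a • A (f a) ∈ N :=
    Submodule.sum_mem _ fun a _ => Submodule.smul_mem _ _ (Submodule.subset_span ⟨f a, rfl⟩)
  set w := B.det • v - ∑ a, t a • A (f a) with hw
  have hwg : ∀ b, w (g b) = 0 := by
    intro b
    have h : Matrix.vecMul t B b = B.det * v (g b) := by
      simp [t, Matrix.vecMul_vecMul, Matrix.adjugate_mul, Matrix.vecMul_smul]
    have h' : Matrix.vecMul t B b = ∑ a, t a * A (f a) (g b) := rfl
    simp [hw, Finset.sum_apply, ← h', h]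
  have hcw : c • w ∈ N := by
    rw [hw, smul_sub, smul_comm]
    exact sub_mem (Submodule.smul_mem _ _ hv) (Submodule.smul_mem _ _ hu)
  obtain ⟨s, hs⟩ := (Submodule.mem_span_range_iff_exists_fun _).1 (hmem _ hcw)
  have hs0 : s = 0 := by
    apply Matrix.eq_zero_of_vecMul_eq_zero hdet
    funext b
    have := congrFun hs (g b)
    rw [hφ, Pi.smul_apply, hwg, smul_zero, map_zero] at this
    rw [Finset.sum_apply] at this
    exact this
  have hw0 : w = 0 := by
    funext j
    have := congrFun hs j
    rw [hs0, hφ] at this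
    simp only [Pi.zero_apply, zero_smul, Finset.sum_const_zero] at this
    have h2 : (c • w) j = 0 := hinj (by rw [← this, map_zero])
    exact (mul_eq_zero.1 h2).resolve_left hc
  rw [sub_eq_zero.1 hw0]
  exact hu

/-- If `A` is row-homogeneous of ℝ-constant rank and `(A_c, A_u)`
is a controllable–uncontrollable decomposition of `A`, then `A_u` is ℝ-elliptic. -/
theorem real_constant_rank_uncontrollable_part_real_elliptic
    {n l lc lu k : ℕ} (hn : 0 < n)
    (A : Matrix (Fin l) (Fin k) (MvPolynomial (Fin n) ℂ))
    (Ac : Matrix (Fin lc) (Fin k) (MvPolynomial (Fin n) ℂ))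
    (Au : Matrix (Fin lu) (Fin k) (MvPolynomial (Fin n) ℂ))
    -- row-homogeneity of A
    (hhom : ∀ i : Fin l, ∃ d : ℕ, ∀ j : Fin k, (A i j).IsHomogeneous d)
    -- constant rank hypothesis
    (hcr : ∃ r : ℕ, ∀ ξ : Fin n → ℝ, ξ ≠ 0 →
      (A.map (eval (fun i => (ξ i : ℂ)))).rank = r)
    -- im_R A^⊤ = im_R A_c^⊤ ∩ im_R A_u^⊤
    (hinter : Submodule.span (MvPolynomial (Fin n) ℂ) (Set.range (fun i j => A i j))
      = Submodule.span (MvPolynomial (Fin n) ℂ) (Set.range (fun i j => Ac i j))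
        ⊓ Submodule.span (MvPolynomial (Fin n) ℂ) (Set.range (fun i j => Au i j)))
    -- R^k/im_R A_c^⊤ is (0)-primary or trivial
    (hc : associatedPrimes (MvPolynomial (Fin n) ℂ)
      ((Fin k → MvPolynomial (Fin n) ℂ) ⧸
        Submodule.span (MvPolynomial (Fin n) ℂ) (Set.range (fun i j => Ac i j))) ⊆ {⊥})
    -- (0) is not an associated prime of R^k/im_R A_u^⊤
    (hu : (⊥ : Ideal (MvPolynomial (Fin n) ℂ)) ∉ associatedPrimes (MvPolynomial (Fin n) ℂ)
      ((Fin k → MvPolynomial (Fin n) ℂ) ⧸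
        Submodule.span (MvPolynomial (Fin n) ℂ) (Set.range (fun i j => Au i j))))
    -- Ass(R^k/im A^⊤) is the disjoint union of the associated primes of the parts
    (hass : associatedPrimes (MvPolynomial (Fin n) ℂ)
        ((Fin k → MvPolynomial (Fin n) ℂ) ⧸
          Submodule.span (MvPolynomial (Fin n) ℂ) (Set.range (fun i j => A i j)))
      = associatedPrimes (MvPolynomial (Fin n) ℂ)
          ((Fin k → MvPolynomial (Fin n) ℂ) ⧸
            Submodule.span (MvPolynomial (Fin n) ℂ) (Set.range (fun i j => Ac i j)))
        ∪ associatedPrimes (MvPolynomial (Fin n) ℂ)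
          ((Fin k → MvPolynomial (Fin n) ℂ) ⧸
            Submodule.span (MvPolynomial (Fin n) ℂ) (Set.range (fun i j => Au i j))))
    (hdisj : Disjoint
      (associatedPrimes (MvPolynomial (Fin n) ℂ)
        ((Fin k → MvPolynomial (Fin n) ℂ) ⧸
          Submodule.span (MvPolynomial (Fin n) ℂ) (Set.range (fun i j => Ac i j))))
      (associatedPrimes (MvPolynomial (Fin n) ℂ)
        ((Fin k → MvPolynomial (Fin n) ℂ) ⧸
          Submodule.span (MvPolynomial (Fin n) ℂ) (Set.range (fun i j => Au i j))))) :
    ∀ ξ : Fin n → ℝ, ξ ≠ 0 →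
      LinearMap.ker ((Au.map (eval (fun i => (ξ i : ℂ)))).mulVecLin) = ⊥ := by
  intro ξ hξ
  obtain ⟨r, hr⟩ := hcr
  have hle := rank_map_algebraMap_le hn A hr
  set e := eval (fun i => (ξ i : ℂ)) with he
  obtain ⟨f, g, hfg⟩ := exists_minor_ne_zero (A.map e)
  rw [Matrix.submatrix_map, ← RingHom.mapMatrix_apply, ← RingHom.map_det] at hfg
  have hrk := hr ξ hξ
  rw [← hrk] at hle
  have htors := minor_smul_mem A hle f g (fun h => hfg (by rw [h, map_zero]))
  -- the annihilator of the uncontrollable part is not contained in the maximal ideal at `ξ`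
  have hann : ¬ Module.annihilator (MvPolynomial (Fin n) ℂ)
      ((Fin k → MvPolynomial (Fin n) ℂ) ⧸
        Submodule.span (MvPolynomial (Fin n) ℂ) (Set.range (fun i j => Au i j)))
        ≤ RingHom.ker e := by
    intro hsub
    have : (RingHom.ker e).IsPrime := RingHom.ker_isPrime e
    obtain ⟨P, hP, hPe⟩ := Ideal.exists_minimalPrimes_le hsub
    have hPu := Module.associatedPrimes.minimalPrimes_annihilator_subset_associatedPrimes _ _ hP
    have hP0 : P ≠ ⊥ := by
      rintro rfl
      exact hu hPu
    have hPA := hass.ge (Or.inr hPu)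
    obtain ⟨-, m, hm⟩ := isAssociatedPrime_iff.1 (AssociatedPrimes.mem_iff.1 hPA)
    obtain ⟨v, rfl⟩ := Submodule.mkQ_surjective _ m
    have hmem : ∀ c, c ∈ P ↔ c • v ∈ Submodule.span (MvPolynomial (Fin n) ℂ)
        (Set.range (fun i j => A i j)) := by
      intro c
      rw [hm, Submodule.mem_colon_singleton, Submodule.mem_bot, ← map_smul, Submodule.mkQ_apply,
        Submodule.Quotient.mk_eq_zero]
    obtain ⟨c, hcP, hc0⟩ := Submodule.exists_mem_ne_zero_of_ne_bot hP0
    exact hfg (hPe ((hmem _).2 (htors c hc0 v ((hmem c).1 hcP))))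
  obtain ⟨s, hs, hse⟩ := Set.not_subset.1 hann
  rw [LinearMap.ker_eq_bot']
  intro x hx
  rw [Matrix.mulVecLin_apply] at hx
  -- every element of the row module of `A_u`, evaluated at `ξ`, is orthogonal to `x`
  have horth : ∀ w ∈ Submodule.span (MvPolynomial (Fin n) ℂ) (Set.range (fun i j => Au i j)),
      ∑ j, e (w j) * x j = 0 := by
    intro w hw
    induction hw using Submodule.span_induction with
    | mem w hw =>
      obtain ⟨i, rfl⟩ := hw
      exact congrFun hx i
    | zero => simp
    | add a b _ _ ha hb => simp [add_mul, Finset.sum_add_distrib, ha, hb]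
    | smul a b _ hb => simp [mul_assoc, ← Finset.mul_sum, hb]
  funext j
  have hsj : s • (Pi.single j 1 : Fin k → MvPolynomial (Fin n) ℂ) ∈
      Submodule.span (MvPolynomial (Fin n) ℂ) (Set.range (fun i j => Au i j)) := by
    rw [← Submodule.Quotient.mk_eq_zero, Submodule.Quotient.mk_smul]
    exact Module.mem_annihilator.1 hs _
  have h := horth _ hsj
  rw [Finset.sum_eq_single j (fun b _ hb => by simp [Pi.single_eq_of_ne hb]) (by simp)] at h
  simp only [Pi.smul_apply, Pi.single_eq_same, smul_eq_mul, mul_one] at h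
  exact (mul_eq_zero.1 h).resolve_left hse
end
end

section
/- Let R = ℂ[x₁,…,xₙ], let A be a row-homogeneous ℓ×k matrix over R of ℂ-constant rank (there is an integer r with rank A(ξ) = r for all ξ ∈ ℂⁿ∖{0}), and let (A_c, A_u) be a controllable–uncontrollable decomposition of A. Then A_u is ℂ-elliptic: for every ξ ∈ ℂⁿ∖{0}, ker_ℂ A_u(ξ) = {0}. -/
/-!
Away from the origin the module `M = R^k / im A^⊤` is locally free: near a point `ξ ≠ 0` the
constant rank `r` allows constant matrices `L`, `Q` with `L A(ξ) Q = 1`, so `s = det (L A Q)` is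
nonzero at `ξ`, and where `s` does not vanish the rows of `L A` span the row space of `A`, on which
right multiplication by `Q` is injective. Consequently every torsion element `w` of `M` is killed
by `s` (`smul_mem_rowSpan`): subtracting from `s w` the combination of rows of `L A` which agrees
with it after multiplication by `Q` leaves a torsion element `y` with `y Q = 0`, and such a `y`
vanishes pointwise on a dense set.

If `A_u(ξ)` had a nonzero kernel vector, the annihilator of `R^k / im A_u^⊤` would consist of
polynomials vanishing at `ξ`, so some associated prime `P` of this module would consist of such
polynomials. Then `P ≠ 0` is also an associated prime of `M`, hence the annihilator of a torsion
element, and so contains an `s` with `s(ξ) ≠ 0`, a contradiction.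
-/

open MvPolynomial

noncomputable section

/-- A matrix of rank `r` over a field can be compressed to the identity of size `r`. -/
lemma exists_mul_mul_eq_one_s7 {m p r : ℕ} (a : Matrix (Fin m) (Fin p) ℂ) (h : a.rank = r) :
    ∃ (L : Matrix (Fin r) (Fin m) ℂ) (Q : Matrix (Fin p) (Fin r) ℂ), L * a * Q = 1 := by
  let b := Module.finBasisOfFinrankEq ℂ (LinearMap.range a.mulVecLin) h
  have hb : ∀ i, ∃ c : Fin p → ℂ, a.mulVecLin c = b i := fun i => (b i).2
  choose c hc using hb
  let Q : Matrix (Fin p) (Fin r) ℂ := Matrix.of fun j i => c i j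
  have hcol : (a * Q).col = fun i => ((b i : LinearMap.range a.mulVecLin) : Fin m → ℂ) := by
    funext i
    rw [← hc i]
    rfl
  have hinj : Function.Injective (a * Q).mulVec := by
    rw [Matrix.mulVec_injective_iff, hcol]
    exact b.linearIndependent.map' (Submodule.subtype _) (Submodule.ker_subtype _)
  obtain ⟨g, hg⟩ := (Matrix.toLin' (a * Q)).exists_leftInverse_of_injective
    (LinearMap.ker_eq_bot.2 hinj)
  refine ⟨LinearMap.toMatrix' g, Q, ?_⟩
  have := congrArg LinearMap.toMatrix' hg
  rw [LinearMap.toMatrix'_comp, LinearMap.toMatrix'_toLin', LinearMap.toMatrix'_id] at this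
  rw [Matrix.mul_assoc, this]

/-- If `L a Q` is invertible of size `rank a`, then right multiplication by `Q` is injective on
the row space of `a`. -/
lemma vecMul_eq_zero_of_det_ne_zero {m p r : ℕ} (a : Matrix (Fin m) (Fin p) ℂ) (h : a.rank = r)
    (L : Matrix (Fin r) (Fin m) ℂ) (Q : Matrix (Fin p) (Fin r) ℂ) (hdet : (L * a * Q).det ≠ 0)
    (x : Fin m → ℂ) (hx : Matrix.vecMul (Matrix.vecMul x a) Q = 0) : Matrix.vecMul x a = 0 := by
  have hW : LinearMap.range (L * a).vecMulLinear ≤ LinearMap.range a.vecMulLinear := by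
    rintro _ ⟨z, rfl⟩
    exact ⟨Matrix.vecMul z L, by simp [Matrix.vecMul_vecMul]⟩
  have hker : LinearMap.ker (L * a).vecMulLinear = ⊥ := by
    rw [LinearMap.ker_eq_bot']
    intro z hz
    apply Matrix.eq_zero_of_vecMul_eq_zero hdet
    rw [← Matrix.vecMul_vecMul]
    simp only [Matrix.vecMulLinear_apply] at hz
    rw [hz, Matrix.zero_vecMul]
  have hWr : Module.finrank ℂ (LinearMap.range (L * a).vecMulLinear) = r := by
    rw [LinearMap.finrank_range_of_inj (LinearMap.ker_eq_bot.1 hker)]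
    simp
  have hVr : Module.finrank ℂ (LinearMap.range a.vecMulLinear) = r := by
    rw [← h, ← Matrix.rank_transpose, Matrix.rank, Matrix.mulVecLin_transpose]
  have hEq := Submodule.eq_of_le_of_finrank_eq hW (hWr.trans hVr.symm)
  have hmem : Matrix.vecMul x a ∈ LinearMap.range (L * a).vecMulLinear := by
    rw [hEq]
    exact ⟨x, rfl⟩
  obtain ⟨z, hz⟩ := hmem
  simp only [Matrix.vecMulLinear_apply] at hz
  rw [← hz, Matrix.vecMul_vecMul] at hx
  rw [← hz, Matrix.eq_zero_of_vecMul_eq_zero hdet hx, Matrix.zero_vecMul]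

lemma mem_rowSpan_iff {R : Type*} [CommRing R] {m p : ℕ} (a : Matrix (Fin m) (Fin p) R)
    (w : Fin p → R) :
    w ∈ Submodule.span R (Set.range (fun i j => a i j)) ↔ ∃ x, Matrix.vecMul x a = w := by
  rw [Submodule.mem_span_range_iff_exists_fun]
  simp only [Matrix.vecMul_eq_sum]

lemma eval_comp_vecMul {n m p : ℕ} (ξ : Fin n → ℂ) (x : Fin m → MvPolynomial (Fin n) ℂ)
    (a : Matrix (Fin m) (Fin p) (MvPolynomial (Fin n) ℂ)) :
    eval ξ ∘ Matrix.vecMul x a = Matrix.vecMul (eval ξ ∘ x) (a.map (eval ξ)) := by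
  funext i
  rw [Function.comp_apply, RingHom.map_vecMul]

/-- Near a point `ξ ≠ 0` the cokernel of a matrix of constant rank is torsion-free: every torsion
element is killed by a polynomial which does not vanish at `ξ`. -/
lemma smul_mem_rowSpan {n l k r : ℕ} (A : Matrix (Fin l) (Fin k) (MvPolynomial (Fin n) ℂ))
    (hcr : ∀ ξ : Fin n → ℂ, ξ ≠ 0 → (A.map (eval ξ)).rank = r) (ξ : Fin n → ℂ) (hξ : ξ ≠ 0)
    (p : MvPolynomial (Fin n) ℂ) (hp : p ≠ 0) (w : Fin k → MvPolynomial (Fin n) ℂ)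
    (hw : p • w ∈ Submodule.span (MvPolynomial (Fin n) ℂ) (Set.range (fun i j => A i j))) :
    ∃ s : MvPolynomial (Fin n) ℂ, eval ξ s ≠ 0 ∧
      s • w ∈ Submodule.span (MvPolynomial (Fin n) ℂ) (Set.range (fun i j => A i j)) := by
  obtain ⟨L₀, Q₀, hLQ⟩ := exists_mul_mul_eq_one_s7 _ (hcr ξ hξ)
  set L : Matrix (Fin r) (Fin l) (MvPolynomial (Fin n) ℂ) := L₀.map C with hL
  set Q : Matrix (Fin k) (Fin r) (MvPolynomial (Fin n) ℂ) := Q₀.map C with hQ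
  have hLe : ∀ η : Fin n → ℂ, L.map (eval η) = L₀ := fun η => by ext; simp [hL]
  have hQe : ∀ η : Fin n → ℂ, Q.map (eval η) = Q₀ := fun η => by ext; simp [hQ]
  have hdet : ∀ η : Fin n → ℂ,
      eval η (L * A * Q).det = (L₀ * A.map (eval η) * Q₀).det := fun η => by
    rw [RingHom.map_det, RingHom.mapMatrix_apply, Matrix.map_mul, Matrix.map_mul, hLe, hQe]
  set s := (L * A * Q).det with hs
  have hsξ : eval ξ s ≠ 0 := by
    rw [hdet, hLQ, Matrix.det_one]
    exact one_ne_zero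
  refine ⟨s, hsξ, ?_⟩
  -- Cramer's rule gives the combination of rows of `L A` agreeing with `s w` modulo `ker Q`.
  set d := Matrix.vecMul (Matrix.vecMul w Q) (L * A * Q).adjugate with hd
  set y := s • w - Matrix.vecMul (Matrix.vecMul d L) A with hy
  have hyQ : Matrix.vecMul y Q = 0 := by
    rw [hy, Matrix.sub_vecMul, Matrix.smul_vecMul, Matrix.vecMul_vecMul, Matrix.vecMul_vecMul,
      ← Matrix.mul_assoc, hd, Matrix.vecMul_vecMul, Matrix.adjugate_mul, Matrix.vecMul_smul,
      Matrix.vecMul_one, sub_self]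
  have hpy : p • y ∈ Submodule.span (MvPolynomial (Fin n) ℂ) (Set.range (fun i j => A i j)) := by
    rw [hy, smul_sub, smul_comm]
    exact Submodule.sub_mem _ (Submodule.smul_mem _ _ hw)
      (Submodule.smul_mem _ _ ((mem_rowSpan_iff _ _).2 ⟨_, rfl⟩))
  obtain ⟨x, hx⟩ := (mem_rowSpan_iff _ _).1 hpy
  have hs0 : s ≠ 0 := by
    rintro h0
    simp [h0] at hsξ
  obtain ⟨i₀, -⟩ := Function.ne_iff.1 hξ
  -- The factors `X i₀` and `s` discard the points where the pointwise argument does not apply.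
  have hzero : y = 0 := by
    funext j
    have hprod : X i₀ * s * (p * y j) = 0 := by
      apply MvPolynomial.funext
      intro η
      simp only [map_mul, eval_X, map_zero]
      by_cases hη : η = 0
      · simp [hη]
      by_cases hsη : eval η s = 0
      · simp [hsη]
      have hxη : Matrix.vecMul (eval η ∘ x) (A.map (eval η)) = eval η ∘ (p • y) := by
        rw [← hx, eval_comp_vecMul]
      have := vecMul_eq_zero_of_det_ne_zero (A.map (eval η)) (hcr η hη) L₀ Q₀
        (by rwa [← hdet]) (eval η ∘ x) (by
          rw [hxη, ← hQe η, ← eval_comp_vecMul, Matrix.smul_vecMul, hyQ]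
          ext; simp)
      rw [hxη] at this
      have hj := congrFun this j
      simp only [Function.comp_apply, Pi.smul_apply, smul_eq_mul, map_mul, Pi.zero_apply] at hj
      rw [hj, mul_zero]
    simpa [hs0, hp] using hprod
  rw [sub_eq_zero.1 (hy.symm.trans hzero)]
  exact (mem_rowSpan_iff _ _).2 ⟨_, rfl⟩

/-- If `A` is row-homogeneous of ℂ-constant rank and `(A_c, A_u)`
is a controllable–uncontrollable decomposition of `A`, then `A_u` is ℂ-elliptic. -/
theorem complex_constant_rank_uncontrollable_part_complex_elliptic
    {n l lc lu k : ℕ} (hn : 0 < n)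
    (A : Matrix (Fin l) (Fin k) (MvPolynomial (Fin n) ℂ))
    (Ac : Matrix (Fin lc) (Fin k) (MvPolynomial (Fin n) ℂ))
    (Au : Matrix (Fin lu) (Fin k) (MvPolynomial (Fin n) ℂ))
    -- row-homogeneity of A
    (hhom : ∀ i : Fin l, ∃ d : ℕ, ∀ j : Fin k, (A i j).IsHomogeneous d)
    -- constant rank hypothesis
    (hcr : ∃ r : ℕ, ∀ ξ : Fin n → ℂ, ξ ≠ 0 → (A.map (eval ξ)).rank = r)
    -- im_R A^⊤ = im_R A_c^⊤ ∩ im_R A_u^⊤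
    (hinter : Submodule.span (MvPolynomial (Fin n) ℂ) (Set.range (fun i j => A i j))
      = Submodule.span (MvPolynomial (Fin n) ℂ) (Set.range (fun i j => Ac i j))
        ⊓ Submodule.span (MvPolynomial (Fin n) ℂ) (Set.range (fun i j => Au i j)))
    -- R^k/im_R A_c^⊤ is (0)-primary or trivial
    (hc : associatedPrimes (MvPolynomial (Fin n) ℂ)
      ((Fin k → MvPolynomial (Fin n) ℂ) ⧸
        Submodule.span (MvPolynomial (Fin n) ℂ) (Set.range (fun i j => Ac i j))) ⊆ {⊥})
    -- (0) is not an associated prime of R^k/im_R A_u^⊤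
    (hu : (⊥ : Ideal (MvPolynomial (Fin n) ℂ)) ∉ associatedPrimes (MvPolynomial (Fin n) ℂ)
      ((Fin k → MvPolynomial (Fin n) ℂ) ⧸
        Submodule.span (MvPolynomial (Fin n) ℂ) (Set.range (fun i j => Au i j))))
    -- Ass(R^k/im A^⊤) is the disjoint union of the associated primes of the parts
    (hass : associatedPrimes (MvPolynomial (Fin n) ℂ)
        ((Fin k → MvPolynomial (Fin n) ℂ) ⧸
          Submodule.span (MvPolynomial (Fin n) ℂ) (Set.range (fun i j => A i j)))
      = associatedPrimes (MvPolynomial (Fin n) ℂ)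
          ((Fin k → MvPolynomial (Fin n) ℂ) ⧸
            Submodule.span (MvPolynomial (Fin n) ℂ) (Set.range (fun i j => Ac i j)))
        ∪ associatedPrimes (MvPolynomial (Fin n) ℂ)
          ((Fin k → MvPolynomial (Fin n) ℂ) ⧸
            Submodule.span (MvPolynomial (Fin n) ℂ) (Set.range (fun i j => Au i j))))
    (hdisj : Disjoint
      (associatedPrimes (MvPolynomial (Fin n) ℂ)
        ((Fin k → MvPolynomial (Fin n) ℂ) ⧸
          Submodule.span (MvPolynomial (Fin n) ℂ) (Set.range (fun i j => Ac i j))))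
      (associatedPrimes (MvPolynomial (Fin n) ℂ)
        ((Fin k → MvPolynomial (Fin n) ℂ) ⧸
          Submodule.span (MvPolynomial (Fin n) ℂ) (Set.range (fun i j => Au i j))))) :
    ∀ ξ : Fin n → ℂ, ξ ≠ 0 → LinearMap.ker ((Au.map (eval ξ)).mulVecLin) = ⊥ := by
  intro ξ hξ
  obtain ⟨r, hr⟩ := hcr
  rw [LinearMap.ker_eq_bot']
  intro v hv
  by_contra hv0
  obtain ⟨j, hj⟩ := Function.ne_iff.1 hv0
  set Nu := Submodule.span (MvPolynomial (Fin n) ℂ) (Set.range (fun i j => Au i j)) with hNu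
  have hann : Module.annihilator (MvPolynomial (Fin n) ℂ)
      ((Fin k → MvPolynomial (Fin n) ℂ) ⧸ Nu) ≤ RingHom.ker (eval ξ) := by
    intro f hf
    have h1 := Module.mem_annihilator.1 hf (Nu.mkQ (Pi.single j 1))
    rw [← map_smul, Submodule.mkQ_apply, Submodule.Quotient.mk_eq_zero] at h1
    obtain ⟨x, hx⟩ := (mem_rowSpan_iff _ _).1 h1
    have h2 : Matrix.vecMul (eval ξ ∘ x) (Au.map (eval ξ)) ⬝ᵥ v = 0 := by
      rw [← Matrix.dotProduct_mulVec, ← Matrix.mulVecLin_apply, hv, dotProduct_zero]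
    have h3 : eval ξ ∘ (f • Pi.single j (1 : MvPolynomial (Fin n) ℂ)) = Pi.single j (eval ξ f) := by
      ext i
      by_cases hij : i = j
      · subst hij; simp
      · simp [hij]
    rw [← eval_comp_vecMul, hx, h3, single_dotProduct] at h2
    exact (mul_eq_zero.1 h2).resolve_right hj
  have hprime : (RingHom.ker (eval ξ : MvPolynomial (Fin n) ℂ →+* ℂ)).IsPrime :=
    RingHom.ker_isPrime _
  obtain ⟨P, hPmin, hPle⟩ := Ideal.exists_minimalPrimes_le hann
  have hPu := Module.associatedPrimes.minimalPrimes_annihilator_subset_associatedPrimes _ _ hPmin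
  have hP0 : P ≠ ⊥ := by
    rintro rfl
    exact hu hPu
  have hPA : P ∈ associatedPrimes (MvPolynomial (Fin n) ℂ)
        ((Fin k → MvPolynomial (Fin n) ℂ) ⧸
          Submodule.span (MvPolynomial (Fin n) ℂ) (Set.range (fun i j => A i j))) := by
    rw [hass]
    exact Or.inr hPu
  obtain ⟨-, w', hw'⟩ := isAssociatedPrime_iff.1 hPA
  obtain ⟨w, rfl⟩ := Submodule.mkQ_surjective _ w'
  have hmem : ∀ f : MvPolynomial (Fin n) ℂ, f ∈ P ↔
      f • w ∈ Submodule.span (MvPolynomial (Fin n) ℂ) (Set.range (fun i j => A i j)) := by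
    intro f
    rw [hw', Submodule.mem_colon_singleton, Submodule.mem_bot, ← map_smul, Submodule.mkQ_apply,
      Submodule.Quotient.mk_eq_zero]
  obtain ⟨p, hpP, hp0⟩ := Submodule.exists_mem_ne_zero_of_ne_bot hP0
  obtain ⟨s, hs, hsw⟩ := smul_mem_rowSpan A hr ξ hξ p hp0 w ((hmem p).1 hpP)
  exact hs (hPle ((hmem s).2 hsw))
end
end

section
/- Let R = ℂ[x₁,…,xₙ], let A ∈ R^{ℓ×k}, A_c ∈ R^{ℓ_c×k}, A_u ∈ R^{ℓ_u×k} be polynomial matrices such that im_R A^⊤ = im_R A_c^⊤ ∩ im_R A_u^⊤ and the quotient module R^k/im_R A_u^⊤ is torsion. Then A and A_c have the same kernel over R: {v ∈ R^k : Av = 0} = {v ∈ R^k : A_c v = 0}. -/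
/-!
A vector lies in the kernel of a matrix iff it is annihilated, under the dot product, by the whole
row module (`mem_ker_iff_forall_mem_span`). Since the rows of `A` lie in the row module of `Ac`,
this gives `ker Ac ≤ ker A`. Conversely, as the quotient by the row module of `Au` is torsion, each
row `w` of `Ac` has a nonzero multiple `r • w` in both row modules, hence in that of `A`; so
`A v = 0` forces `r * (w ⬝ᵥ v) = 0`, and `w ⬝ᵥ v = 0` because the polynomial ring is a domain.
-/

open MvPolynomial

noncomputable section

theorem mem_ker_iff_forall_mem_span {R : Type*} [CommRing R] {m k : ℕ}
    (B : Matrix (Fin m) (Fin k) R) (v : Fin k → R) :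
    v ∈ LinearMap.ker B.mulVecLin ↔
      ∀ w ∈ Submodule.span R (Set.range (fun i j => B i j)), w ⬝ᵥ v = 0 := by
  rw [LinearMap.mem_ker, Matrix.mulVecLin_apply]
  constructor
  · intro h w hw
    induction hw using Submodule.span_induction with
    | mem x hx =>
      obtain ⟨i, rfl⟩ := hx
      exact congrFun h i
    | zero => exact zero_dotProduct v
    | add x y _ _ hx hy => rw [add_dotProduct, hx, hy, add_zero]
    | smul a x _ hx => rw [smul_dotProduct, hx, smul_zero]
  · intro h
    funext i
    exact h _ (Submodule.subset_span ⟨i, rfl⟩)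

/-- If `im_R A^⊤ = im_R A_c^⊤ ∩ im_R A_u^⊤` and the quotient
module `R^k / im_R A_u^⊤` is torsion, then `ker_R A = ker_R A_c`. -/
theorem kernel_eq_kernel_of_controllable_part
    {n l lc lu k : ℕ} (hn : 0 < n)
    (A : Matrix (Fin l) (Fin k) (MvPolynomial (Fin n) ℂ))
    (Ac : Matrix (Fin lc) (Fin k) (MvPolynomial (Fin n) ℂ))
    (Au : Matrix (Fin lu) (Fin k) (MvPolynomial (Fin n) ℂ))
    (hinter : Submodule.span (MvPolynomial (Fin n) ℂ) (Set.range (fun i j => A i j))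
      = Submodule.span (MvPolynomial (Fin n) ℂ) (Set.range (fun i j => Ac i j))
        ⊓ Submodule.span (MvPolynomial (Fin n) ℂ) (Set.range (fun i j => Au i j)))
    -- R^k/im_R A_u^⊤ is torsion
    (htor : ∀ m : (Fin k → MvPolynomial (Fin n) ℂ) ⧸
        Submodule.span (MvPolynomial (Fin n) ℂ) (Set.range (fun i j => Au i j)),
      ∃ r : MvPolynomial (Fin n) ℂ, r ≠ 0 ∧ r • m = 0) :
    LinearMap.ker A.mulVecLin = LinearMap.ker Ac.mulVecLin := by
  ext v
  rw [mem_ker_iff_forall_mem_span, mem_ker_iff_forall_mem_span, hinter]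
  constructor
  · intro h w hw
    obtain ⟨r, hr, hrw⟩ := htor (Submodule.Quotient.mk w)
    rw [← Submodule.Quotient.mk_smul, Submodule.Quotient.mk_eq_zero] at hrw
    have h0 := h (r • w) ⟨Submodule.smul_mem _ r hw, hrw⟩
    rw [smul_dotProduct, smul_eq_mul] at h0
    exact (mul_eq_zero.mp h0).resolve_left hr
  · intro h w hw
    exact h w hw.1
end
end

section
/- Let R = ℂ[x₁,…,xₙ] and let A be an ℓ×k matrix over R. Then ker_R A = {0} if and only if there exists a nonzero polynomial g ∈ R such that for every ξ ∈ ℂⁿ with g(ξ) ≠ 0 the evaluated matrix A(ξ) has trivial null space, ker_ℂ A(ξ) = {0}; that is, ker_ℂ A(ξ) = {0} for all ξ ∈ ℂⁿ outside a proper complex algebraic variety. -/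
/-!
If `A` is injective over the domain `R = ℂ[x₁,…,xₙ]`, its columns stay linearly independent over
the fraction field of `R`, so `A` has a left inverse there; clearing denominators gives a matrix `B`
over `R` and a nonzero `g` with `B * A = g • 1`. Evaluating this identity at `ξ` shows that `A(ξ)`
is injective as soon as `g(ξ) ≠ 0`. Conversely, if `A v = 0`, then `v(ξ) = 0` wherever `g(ξ) ≠ 0`,
so each `g * v j` vanishes at every point, hence is zero as a polynomial because `ℂ` is infinite,
and `v = 0`.
-/

open MvPolynomial

noncomputable section

/-- Over a domain, an injective matrix has a left inverse up to a nonzero scalar: a left inverse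
over the fraction field, multiplied by a common denominator of its entries. -/
lemma exists_mul_eq_smul_one {R : Type*} [CommRing R] [IsDomain R] {l k : ℕ}
    (A : Matrix (Fin l) (Fin k) R) (hA : LinearMap.ker A.mulVecLin = ⊥) :
    ∃ (g : R) (B : Matrix (Fin k) (Fin l) R), g ≠ 0 ∧ B * A = g • 1 := by
  let K := FractionRing R
  have hinj : Function.Injective (algebraMap R K) := IsFractionRing.injective R K
  have hcol : LinearIndependent R A.col :=
    Matrix.mulVec_injective_iff.1 (LinearMap.ker_eq_bot.1 hA)
  have hcolK : LinearIndependent K (A.map (algebraMap R K)).col := by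
    rw [← LinearIndependent.iff_fractionRing (R := R)]
    have hφ : LinearMap.ker ((Algebra.linearMap R K).compLeft (Fin l)) = ⊥ :=
      LinearMap.ker_eq_bot.2 fun v w h => funext fun i => hinj (congrFun h i)
    exact hcol.map' _ hφ
  obtain ⟨f, hf⟩ := LinearMap.exists_leftInverse_of_injective
    (A.map (algebraMap R K)).mulVecLin
    (LinearMap.ker_eq_bot.2 (Matrix.mulVec_injective_iff.2 hcolK))
  let C := LinearMap.toMatrix' f
  have hC : C * A.map (algebraMap R K) = 1 := by
    have := congrArg LinearMap.toMatrix' hf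
    rwa [LinearMap.toMatrix'_comp, ← Matrix.toLin'_apply', LinearMap.toMatrix'_toLin',
      LinearMap.toMatrix'_id] at this
  obtain ⟨b, hb⟩ := IsLocalization.exist_integer_multiples_of_finite (nonZeroDivisors R)
    (fun p : Fin k × Fin l => C p.1 p.2)
  choose B hB using hb
  refine ⟨b, Matrix.of fun i j => B (i, j), nonZeroDivisors.ne_zero b.2, ?_⟩
  have hBC : (Matrix.of fun i j => B (i, j)).map (algebraMap R K) = (b : R) • C := by
    ext i j
    exact hB (i, j)
  apply Matrix.map_injective hinj
  dsimp only
  rw [Matrix.map_mul, hBC, Matrix.smul_mul, hC]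
  ext i j
  by_cases h : i = j <;> simp [h, Matrix.smul_apply, Algebra.algebraMap_eq_smul_one]

/-- `ker_R A = {0}` iff there is a nonzero polynomial `g` such
that `ker_ℂ A(ξ) = {0}` for every `ξ ∈ ℂⁿ` with `g(ξ) ≠ 0`; i.e. the evaluated
matrix has trivial null space outside a proper complex algebraic variety. -/
theorem trivial_kernel_iff_generically_injective_complex
    {n l k : ℕ} (hn : 0 < n)
    (A : Matrix (Fin l) (Fin k) (MvPolynomial (Fin n) ℂ)) :
    LinearMap.ker A.mulVecLin = ⊥
    ↔ ∃ g : MvPolynomial (Fin n) ℂ, g ≠ 0 ∧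
        ∀ ξ : Fin n → ℂ, eval ξ g ≠ 0 →
          LinearMap.ker ((A.map (eval ξ)).mulVecLin) = ⊥ := by
  constructor
  · intro hA
    obtain ⟨g, B, hg, hBA⟩ := exists_mul_eq_smul_one A hA
    refine ⟨g, hg, fun ξ hξ => ?_⟩
    rw [LinearMap.ker_eq_bot']
    intro v hv
    rw [Matrix.mulVecLin_apply] at hv
    have hev : B.map (eval ξ) * A.map (eval ξ) = eval ξ g • 1 := by
      rw [← Matrix.map_mul, hBA]
      ext i j
      by_cases h : i = j <;> simp [h]
    have h0 : eval ξ g • v = 0 := by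
      have := congrArg (fun M => Matrix.mulVec M v) hev
      simpa [← Matrix.mulVec_mulVec, hv, Matrix.smul_mulVec] using this.symm
    exact (smul_eq_zero.1 h0).resolve_left hξ
  · rintro ⟨g, hg, h⟩
    rw [LinearMap.ker_eq_bot']
    intro v hv
    rw [Matrix.mulVecLin_apply] at hv
    funext j
    refine (mul_eq_zero.1 (MvPolynomial.funext fun ξ => ?_ : g * v j = 0)).resolve_left hg
    rw [map_mul, map_zero]
    by_cases hξ : eval ξ g = 0
    · rw [hξ, zero_mul]
    · have hvξ : (A.map (eval ξ)).mulVecLin (fun i => eval ξ (v i)) = 0 := by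
        funext i
        have := RingHom.map_mulVec (eval ξ) A v i
        rw [hv] at this
        simpa [Function.comp_def] using this.symm
      have := congrFun (LinearMap.ker_eq_bot'.1 (h ξ hξ) _ hvξ) j
      rw [show eval ξ (v j) = 0 from this, mul_zero]
end
end

section
/- Let R = ℂ[x₁,…,xₙ] and let A be an ℓ×k matrix over R. Then ker_R A = {0} if and only if there exists a polynomial g ∈ R that does not vanish identically on ℝⁿ such that for every ξ ∈ ℝⁿ with g(ξ) ≠ 0 the evaluated matrix A(ξ) has trivial null space, ker_ℂ A(ξ) = {0}; that is, ker_ℂ A(ξ) = {0} for all ξ ∈ ℝⁿ outside a proper real algebraic variety. -/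
/-!
Polynomials that vanish on all of `ℝⁿ` are zero, because `ℝ` is an infinite subset of `ℂ`.

If `A` has trivial kernel over `R`, it has trivial kernel over `Frac R` (clear the denominators of
a kernel vector), so it has a left inverse over `Frac R`. Clearing denominators there gives a
matrix `B` over `R` and a nonzero `d` with `B * A = d • 1`. This identity can be evaluated at any
point, so `A(ξ)` is injective wherever `d(ξ) ≠ 0`, and `g = d` works.

Conversely, if `A v = 0`, then each `g * vᵢ` vanishes at every real point: either `g(ξ) = 0`, or
`v(ξ)` lies in the trivial kernel of `A(ξ)`. Hence `g * vᵢ = 0`, and `vᵢ = 0` since `g ≠ 0`.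
-/

open MvPolynomial

noncomputable section

/-- Zero test on the real points only, for polynomials with complex coefficients. -/
lemma eq_zero_of_eval_real {n : ℕ} (p : MvPolynomial (Fin n) ℂ)
    (h : ∀ ξ : Fin n → ℝ, eval (fun i => (ξ i : ℂ)) p = 0) : p = 0 := by
  refine funext_set (fun _ => Set.range (fun x : ℝ => (x : ℂ)))
    (fun _ => Set.infinite_range_of_injective Complex.ofReal_injective) fun x hx => ?_
  choose ξ hξ using fun i => hx i (Set.mem_univ i)
  obtain rfl : (fun i => (ξ i : ℂ)) = x := _root_.funext hξ
  simp [h ξ]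

/-- Over a domain, a matrix with trivial kernel has a left inverse up to a nonzero scalar. -/
lemma exists_left_inverse_up_to_scalar {R : Type*} [CommRing R] [IsDomain R] {l k : ℕ}
    (A : Matrix (Fin l) (Fin k) R) (hA : ∀ v, A.mulVec v = 0 → v = 0) :
    ∃ d : R, d ≠ 0 ∧ ∃ B : Matrix (Fin k) (Fin l) R, B * A = d • (1 : Matrix _ _ R) := by
  let K := FractionRing R
  let f := algebraMap R K
  have hf : Function.Injective f := IsFractionRing.injective R K
  have hK : LinearMap.ker (A.map f).mulVecLin = ⊥ := by
    refine (LinearMap.ker_eq_bot').2 fun w hw => ?_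
    obtain ⟨⟨b, hb⟩, hbw⟩ := IsLocalization.exist_integer_multiples_of_finite (nonZeroDivisors R) w
    have hb0 : f b ≠ 0 := fun h => nonZeroDivisors.ne_zero hb (hf (by simpa using h))
    choose v hv using hbw
    have hv' : f ∘ v = f b • w := by
      ext i
      simpa [Algebra.smul_def, f] using hv i
    have hv0 : v = 0 := by
      refine hA v (_root_.funext fun i => hf ?_)
      rw [RingHom.map_mulVec, hv', Matrix.mulVec_smul]
      have : (A.map f).mulVec w = 0 := hw
      simp [this]
    have : f b • w = 0 := by
      rw [← hv', hv0]
      ext i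
      simp
    exact (smul_eq_zero.1 this).resolve_left hb0
  obtain ⟨g, hg⟩ := LinearMap.exists_leftInverse_of_injective _ hK
  have hC : LinearMap.toMatrix' g * A.map f = 1 := by
    have := congrArg LinearMap.toMatrix' hg
    rwa [LinearMap.toMatrix'_comp, LinearMap.toMatrix'_id, ← Matrix.toLin'_apply',
      LinearMap.toMatrix'_toLin'] at this
  obtain ⟨⟨b, hb⟩, hbC⟩ := IsLocalization.exist_integer_multiples_of_finite (nonZeroDivisors R)
    (fun p : Fin k × Fin l => LinearMap.toMatrix' g p.1 p.2)
  choose B hB using hbC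
  refine ⟨b, nonZeroDivisors.ne_zero hb, Matrix.of fun i j => B (i, j), ?_⟩
  have hB' : (Matrix.of fun i j => B (i, j)).map f = f b • LinearMap.toMatrix' g := by
    ext i j
    simpa [Algebra.smul_def, f] using hB (i, j)
  refine Matrix.map_injective hf ?_
  beta_reduce
  rw [Matrix.map_mul, hB', Matrix.smul_mul, hC]
  ext i j
  by_cases h : i = j <;> simp [h]

/-- `ker_R A = {0}` iff there is a polynomial `g` not vanishing
identically on `ℝⁿ` such that `ker_ℂ A(ξ) = {0}` for every `ξ ∈ ℝⁿ` with
`g(ξ) ≠ 0`; i.e. the evaluated matrix has trivial null space for all real points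
outside a proper real algebraic variety. -/
theorem trivial_kernel_iff_generically_injective_real
    {n l k : ℕ} (hn : 0 < n)
    (A : Matrix (Fin l) (Fin k) (MvPolynomial (Fin n) ℂ)) :
    LinearMap.ker A.mulVecLin = ⊥
    ↔ ∃ g : MvPolynomial (Fin n) ℂ,
        (∃ ξ : Fin n → ℝ, eval (fun i => (ξ i : ℂ)) g ≠ 0) ∧
        ∀ ξ : Fin n → ℝ, eval (fun i => (ξ i : ℂ)) g ≠ 0 →
          LinearMap.ker ((A.map (eval (fun i => (ξ i : ℂ)))).mulVecLin) = ⊥ := by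
  constructor
  · intro h
    obtain ⟨d, hd, B, hB⟩ := exists_left_inverse_up_to_scalar A (LinearMap.ker_eq_bot'.1 h)
    refine ⟨d, ?_, fun ξ hξ => LinearMap.ker_eq_bot'.2 fun w hw => ?_⟩
    · by_contra! h0
      exact hd (eq_zero_of_eval_real d h0)
    · set e := eval (fun i => (ξ i : ℂ)) with he
      have hw' : (A.map e).mulVec w = 0 := hw
      have hBe : B.map e * A.map e = e d • (1 : Matrix _ _ ℂ) := by
        rw [← Matrix.map_mul, hB]
        ext i j
        by_cases h : i = j <;> simp [h]
      have h2 : e d • w = 0 := by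
        have := congrArg (B.map e).mulVec hw'
        rwa [Matrix.mulVec_mulVec, hBe, Matrix.smul_mulVec, Matrix.one_mulVec,
          Matrix.mulVec_zero] at this
      exact (smul_eq_zero.1 h2).resolve_left hξ
  · rintro ⟨g, ⟨ξ₀, hξ₀⟩, hg⟩
    have hg0 : g ≠ 0 := by
      rintro rfl
      simp at hξ₀
    refine LinearMap.ker_eq_bot'.2 fun v hv => _root_.funext fun i => ?_
    have hv' : A.mulVec v = 0 := hv
    refine (mul_eq_zero.1 (eq_zero_of_eval_real (g * v i) fun ξ => ?_)).resolve_left hg0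
    rw [map_mul]
    by_cases hξ : eval (fun i => (ξ i : ℂ)) g = 0
    · simp [hξ]
    · have h1 := LinearMap.ker_eq_bot'.1 (hg ξ hξ) (eval (fun i => (ξ i : ℂ)) ∘ v) (by
        ext j
        rw [Matrix.mulVecLin_apply, ← RingHom.map_mulVec, hv']
        simp)
      have h2 : eval (fun i => (ξ i : ℂ)) (v i) = 0 := congrFun h1 i
      simp [h2]
end
end

section
/- Let R = ℂ[x₁,…,xₙ] and let A be a row-homogeneous ℓ×k matrix over R. Then A is ℂ-elliptic (ker_ℂ A(ξ) = {0} for all ξ ∈ ℂⁿ∖{0}) if and only if every associated prime of M = R^k/im_R A^⊤ equals the maximal ideal (x₁,…,xₙ), i.e. Ass(M) ⊆ {(x₁,…,xₙ)} (equivalently, M is either trivial or (x₁,…,xₙ)-primary). -/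
/-!
Write `M` for the module presented by `A`. The zero locus of `Ann M` is exactly the set of `ξ`
where `A(ξ)` fails to be injective: if `A(ξ)` has a constant left inverse `B`, then `det (B A)`
annihilates `M` and takes the value `1` at `ξ` (`exists_mem_annihilator_eval_ne_zero`), while if
`A(ξ) v = 0` with `v ≠ 0`, every element of `Ann M` vanishes at `ξ`
(`eval_eq_zero_of_mem_annihilator`).

If `A` is elliptic, an associated prime contains `Ann M`, so its zero locus lies in `{0}`; by the
Nullstellensatz it is the ideal of the origin. Conversely, if `A(ξ)` is not injective, the ideal
of `ξ` contains a minimal prime of `Ann M`, which is associated to `M` and hence equals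
`(x₁, …, xₙ)`; this forces `ξ = 0`.
-/

open MvPolynomial

noncomputable section

/-- If `A(ξ)` is injective, some polynomial `f` with `f(ξ) ≠ 0` annihilates the module
presented by `A`: take `f = det (B A)`, with `B` a constant left inverse of `A(ξ)`; then
`f • 1 = adj (B A) B A` by the adjugate identity. -/
theorem exists_mem_annihilator_eval_ne_zero {n l k : ℕ}
    (A : Matrix (Fin l) (Fin k) (MvPolynomial (Fin n) ℂ)) (ξ : Fin n → ℂ)
    (h : LinearMap.ker ((A.map (eval ξ)).mulVecLin) = ⊥) :
    ∃ f ∈ Module.annihilator (MvPolynomial (Fin n) ℂ)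
        ((Fin k → MvPolynomial (Fin n) ℂ) ⧸
          Submodule.span (MvPolynomial (Fin n) ℂ) (Set.range (fun i j => A i j))),
      eval ξ f ≠ 0 := by
  obtain ⟨g, hg⟩ := LinearMap.exists_leftInverse_of_injective _ h
  have hB : LinearMap.toMatrix' g * A.map (eval ξ) = 1 := by
    rw [← LinearMap.toMatrix'_id, ← hg, LinearMap.toMatrix'_comp,
      ← Matrix.toLin'_apply', LinearMap.toMatrix'_toLin']
  set B := LinearMap.toMatrix' g
  -- Naming `B.map C` with an explicit type keeps the product below a product of `Matrix`;
  -- otherwise elaboration picks up the `CStarMatrix` multiplication.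
  obtain ⟨BC, hBC⟩ : ∃ BC : Matrix (Fin k) (Fin l) (MvPolynomial (Fin n) ℂ), BC = B.map C :=
    ⟨_, rfl⟩
  set D : Matrix (Fin k) (Fin k) (MvPolynomial (Fin n) ℂ) := BC * A with hD
  refine ⟨D.det, ?_, ?_⟩
  · rw [Module.mem_annihilator]
    intro m
    obtain ⟨v, rfl⟩ := Submodule.Quotient.mk_surjective _ m
    rw [← Submodule.Quotient.mk_smul, Submodule.Quotient.mk_eq_zero]
    have hv : D.det • v = Matrix.vecMul (Matrix.vecMul v (D.adjugate * BC)) A := by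
      rw [Matrix.vecMul_vecMul, Matrix.mul_assoc, ← hD, Matrix.adjugate_mul,
        Matrix.vecMul_smul, Matrix.vecMul_one]
    rw [hv, Matrix.vecMul_eq_sum]
    exact Submodule.sum_mem _ fun i _ => Submodule.smul_mem _ _ (Submodule.subset_span ⟨i, rfl⟩)
  · have hDξ : D.map (eval ξ) = 1 := by
      rw [hD, Matrix.map_mul, hBC, Matrix.map_map, ← hB]
      congr 1
      ext i j
      simp
    have := RingHom.map_det (eval ξ) D
    rw [this, RingHom.mapMatrix_apply, hDξ, Matrix.det_one]
    exact one_ne_zero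

/-- A polynomial annihilating the module presented by `A` vanishes at every `ξ` where `A(ξ)`
has a kernel: pair `f • eⱼ ∈ im Aᵀ` with a kernel vector and evaluate at `ξ`. -/
theorem eval_eq_zero_of_mem_annihilator {n l k : ℕ}
    (A : Matrix (Fin l) (Fin k) (MvPolynomial (Fin n) ℂ)) (ξ : Fin n → ℂ)
    {v : Fin k → ℂ} (hv : v ≠ 0) (hAv : (A.map (eval ξ)).mulVec v = 0)
    {f : MvPolynomial (Fin n) ℂ}
    (hf : f ∈ Module.annihilator (MvPolynomial (Fin n) ℂ)
        ((Fin k → MvPolynomial (Fin n) ℂ) ⧸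
          Submodule.span (MvPolynomial (Fin n) ℂ) (Set.range (fun i j => A i j)))) :
    eval ξ f = 0 := by
  have key : ∀ w ∈ Submodule.span (MvPolynomial (Fin n) ℂ) (Set.range (fun i j => A i j)),
      ∑ j, eval ξ (w j) * v j = 0 := by
    intro w hw
    induction hw using Submodule.span_induction with
    | mem w hw =>
      obtain ⟨i, rfl⟩ := hw
      exact congrFun hAv i
    | zero => simp
    | add x y _ _ hx hy => simp [add_mul, Finset.sum_add_distrib, hx, hy]
    | smul a x _ hx => simp [mul_assoc, ← Finset.mul_sum, hx]
  obtain ⟨j, hj⟩ := Function.ne_iff.mp hv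
  have h1 := Module.mem_annihilator.mp hf (Submodule.Quotient.mk (Pi.single j 1))
  rw [← Submodule.Quotient.mk_smul, Submodule.Quotient.mk_eq_zero] at h1
  have h2 := key _ h1
  rw [Finset.sum_eq_single j (fun i _ hi => by simp [hi]) (by simp)] at h2
  simpa [show v j ≠ 0 from hj] using h2

theorem vanishingIdeal_zero_eq_span_X (n : ℕ) :
    vanishingIdeal ℂ {(0 : Fin n → ℂ)} =
      Ideal.span (Set.range (X : Fin n → MvPolynomial (Fin n) ℂ)) := by
  ext p
  rw [mem_vanishingIdeal_singleton_iff, ← Set.image_univ, mem_ideal_span_X_image,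
    aeval_zero]
  constructor
  · intro h m hm
    by_contra! h0
    have : m = 0 := by ext i; simpa using h0 i
    subst this
    rw [mem_support_iff] at hm
    exact hm (by simpa [constantCoeff_eq] using h)
  · intro h
    by_contra h0
    obtain ⟨i, -, hi⟩ := h 0 (by
      rw [mem_support_iff]
      intro h1
      exact h0 (by simp [constantCoeff_eq, h1]))
    exact hi rfl

/-- A row-homogeneous polynomial matrix `A` is ℂ-elliptic
(`ker_ℂ A(ξ) = {0}` for all `ξ ∈ ℂⁿ∖{0}`) iff every associated prime of
`M = R^k / im_R A^⊤` equals the maximal ideal `(x₁,…,xₙ)`. -/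
theorem complex_elliptic_iff_associatedPrimes_subset_irrelevant
    {n l k : ℕ} (hn : 0 < n)
    (A : Matrix (Fin l) (Fin k) (MvPolynomial (Fin n) ℂ))
    (hhom : ∀ i : Fin l, ∃ d : ℕ, ∀ j : Fin k, (A i j).IsHomogeneous d) :
    (∀ ξ : Fin n → ℂ, ξ ≠ 0 → LinearMap.ker ((A.map (eval ξ)).mulVecLin) = ⊥)
    ↔ associatedPrimes (MvPolynomial (Fin n) ℂ)
        ((Fin k → MvPolynomial (Fin n) ℂ) ⧸
          Submodule.span (MvPolynomial (Fin n) ℂ) (Set.range (fun i j => A i j)))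
        ⊆ {Ideal.span (Set.range (X : Fin n → MvPolynomial (Fin n) ℂ))} := by
  set I := Submodule.span (MvPolynomial (Fin n) ℂ) (Set.range (fun i j => A i j)) with hI
  constructor
  · intro hell P hP
    have hprime : P.IsPrime := hP.1
    have hann : Module.annihilator (MvPolynomial (Fin n) ℂ)
        ((Fin k → MvPolynomial (Fin n) ℂ) ⧸ I) ≤ P := by
      rw [← Submodule.annihilator_top]
      exact IsAssociatedPrime.annihilator_le hP
    have hsub : zeroLocus ℂ P ⊆ {0} := by
      intro ξ hξ
      by_contra hne
      obtain ⟨f, hf, hfξ⟩ := exists_mem_annihilator_eval_ne_zero A ξ (hell ξ hne)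
      exact hfξ (by simpa [aeval_eq_eval] using hξ f (hann hf))
    have hPv : vanishingIdeal ℂ (zeroLocus ℂ P) = P := IsPrime.vanishingIdeal_zeroLocus P
    rw [Set.mem_singleton_iff, ← vanishingIdeal_zero_eq_span_X, ← hPv]
    rcases Set.subset_singleton_iff_eq.mp hsub with h | h
    · rw [h, vanishingIdeal_empty] at hPv
      exact absurd hPv.symm hprime.ne_top
    · rw [h]
  · intro hass ξ hξ
    rw [LinearMap.ker_eq_bot']
    intro v hAv
    by_contra hv
    have hle : Module.annihilator (MvPolynomial (Fin n) ℂ)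
        ((Fin k → MvPolynomial (Fin n) ℂ) ⧸ I) ≤ vanishingIdeal ℂ {ξ} := by
      intro f hf
      rw [mem_vanishingIdeal_singleton_iff, aeval_eq_eval]
      exact eval_eq_zero_of_mem_annihilator A ξ hv hAv hf
    obtain ⟨Q, hQ, hQξ⟩ := Ideal.exists_minimalPrimes_le hle
    have hQX := hass (Module.associatedPrimes.minimalPrimes_annihilator_subset_associatedPrimes _ _ hQ)
    rw [Set.mem_singleton_iff] at hQX
    refine hξ (funext fun i => ?_)
    have hX : (X i : MvPolynomial (Fin n) ℂ) ∈ vanishingIdeal ℂ {ξ} :=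
      hQξ (hQX ▸ Ideal.subset_span ⟨i, rfl⟩)
    simpa using (mem_vanishingIdeal_singleton_iff ξ _).mp hX
end
end

section
/- Let R = ℂ[x₁,…,xₙ] and let A be an ℓ×k matrix over R. Then there exist natural numbers ℓ_c, ℓ_u and polynomial matrices A_c ∈ R^{ℓ_c×k}, A_u ∈ R^{ℓ_u×k} such that: (i) im_R A^⊤ = im_R A_c^⊤ ∩ im_R A_u^⊤ as submodules of R^k; (ii) Ass(R^k/im_R A_c^⊤) ⊆ {(0)}, i.e. R^k/im_R A_c^⊤ is (0)-primary or trivial; (iii) the zero ideal (0) is not an associated prime of R^k/im_R A_u^⊤; (iv) ker_R A_u = {0}; (v) Ass(R^k/im_R A^⊤) is the disjoint union of Ass(R^k/im_R A_c^⊤) and Ass(R^k/im_R A_u^⊤). -/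
/-!
Let `R` be a Noetherian domain, `F` a Noetherian `R`-module and `N` a submodule of `F`. The
controllable part is the torsion closure `C` of `N`, so that `F ⧸ C` is torsion-free and
`C ⧸ N` is the torsion submodule of `F ⧸ N`. The uncontrollable part is a submodule `U`
maximal with respect to `U ⊓ C = N`. Maximality makes `C ⧸ N → F ⧸ U` an essential embedding, and an
essential extension has the same associated primes. Hence `Ass (F ⧸ U) = Ass (C ⧸ N)`,
which consists of the nonzero associated primes of `F ⧸ N`, while `Ass (F ⧸ C)` contains at most
the zero ideal, and does so exactly when `F ⧸ N` is not torsion (`exists_torsion_splitting`).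

Since `(0)` is not associated to `F ⧸ U`, that quotient is torsion. For `F = R^k` this
forces a matrix whose rows generate `U` to have trivial kernel
(`ker_mulVecLin_eq_bot_of_torsion`).
-/

open MvPolynomial

noncomputable section

/-- Over a Noetherian ring, the associated primes of `F ⧸ N` are the primes of the form
`{r | r • x ∈ N}` with `x : F`. -/
lemma mem_associatedPrimes_quotient_iff {R F : Type*} [CommRing R] [IsNoetherianRing R]
    [AddCommGroup F] [Module R F] (N : Submodule R F) (P : Ideal R) :
    P ∈ associatedPrimes R (F ⧸ N) ↔ P.IsPrime ∧ ∃ x : F, ∀ r, r ∈ P ↔ r • x ∈ N := by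
  rw [AssociatedPrimes.mem_iff, isAssociatedPrime_iff]
  refine and_congr_right fun _ => ?_
  rw [N.mkQ_surjective.exists]
  refine exists_congr fun x => ?_
  rw [Ideal.ext_iff]
  refine forall_congr' fun r => ?_
  rw [Submodule.mem_colon_singleton, Submodule.mem_bot, ← map_smul, Submodule.mkQ_apply,
    Submodule.Quotient.mk_eq_zero]

/-- The torsion closure of `N` in `F`: the vectors having a nonzero multiple in `N`, that is, the
preimage in `F` of the torsion submodule of `F ⧸ N`. -/
def torsionClosure {R F : Type*} [CommRing R] [IsDomain R] [AddCommGroup F] [Module R F]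
    (N : Submodule R F) : Submodule R F where
  carrier := {x | ∃ a : R, a ≠ 0 ∧ a • x ∈ N}
  zero_mem' := ⟨1, one_ne_zero, by simp⟩
  add_mem' := by
    rintro x y ⟨a, ha, hx⟩ ⟨b, hb, hy⟩
    refine ⟨a * b, mul_ne_zero ha hb, ?_⟩
    rw [smul_add]
    refine N.add_mem ?_ ?_
    · rw [mul_comm, mul_smul]
      exact N.smul_mem b hx
    · rw [mul_smul]
      exact N.smul_mem a hy
  smul_mem' := by
    rintro c x ⟨a, ha, hx⟩
    refine ⟨a, ha, ?_⟩
    rw [smul_comm]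
    exact N.smul_mem c hx

lemma mem_torsionClosure {R F : Type*} [CommRing R] [IsDomain R] [AddCommGroup F] [Module R F]
    {N : Submodule R F} {x : F} : x ∈ torsionClosure N ↔ ∃ a : R, a ≠ 0 ∧ a • x ∈ N :=
  Iff.rfl

/-- Every submodule `N` is the intersection of its torsion closure `C` and a submodule `U`, where
`Ass (F ⧸ C) ⊆ {(0)}`, `(0) ∉ Ass (F ⧸ U)` and `Ass (F ⧸ N)` is the union of the two sets. -/
lemma exists_torsion_splitting {R F : Type*} [CommRing R] [IsDomain R] [IsNoetherianRing R]
    [AddCommGroup F] [Module R F] [IsNoetherian R F] (N : Submodule R F) :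
    ∃ C U : Submodule R F, N = C ⊓ U ∧ associatedPrimes R (F ⧸ C) ⊆ {⊥} ∧
      ⊥ ∉ associatedPrimes R (F ⧸ U) ∧
      associatedPrimes R (F ⧸ N) = associatedPrimes R (F ⧸ C) ∪ associatedPrimes R (F ⧸ U) := by
  set C := torsionClosure N with hC
  have hNC : N ≤ C := fun x hx => ⟨1, one_ne_zero, by simpa using hx⟩
  obtain ⟨U, hU, hmax⟩ := set_has_maximal_iff_noetherian.mpr
    (inferInstance : IsNoetherian R F) {U : Submodule R F | U ⊓ C = N} ⟨N, inf_eq_left.mpr hNC⟩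
  have hU' : U ⊓ C = N := hU
  have hNU : N ≤ U := hU' ▸ inf_le_left
  have mem_iff : ∀ z ∈ C, (z ∈ N ↔ z ∈ U) := fun z hz =>
    ⟨fun h => hNU h, fun h => hU' ▸ ⟨h, hz⟩⟩
  have hCbot : associatedPrimes R (F ⧸ C) ⊆ {⊥} := by
    intro P hP
    obtain ⟨hp, x, hx⟩ := (mem_associatedPrimes_quotient_iff C P).mp hP
    refine (Submodule.eq_bot_iff P).mpr fun r hr => ?_
    by_contra hr0
    obtain ⟨a, ha, hax⟩ := mem_torsionClosure.mp ((hx r).mp hr)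
    have hxC : x ∈ C := ⟨a * r, mul_ne_zero ha hr0, by rwa [mul_smul]⟩
    exact hp.ne_top ((Ideal.eq_top_iff_one P).mpr ((hx 1).mpr (by rwa [one_smul])))
  -- `C ⧸ N` is essential in `F ⧸ U`: a vector outside `U` has a multiple which, modulo `U`, is
  -- represented by a vector `z` of `C` outside `U`; if `{s | s • y ∈ U}` is a prime `P`,
  -- the same `P` is the annihilator of the class of `z` in `F ⧸ N`.
  have key : ∀ P ∈ associatedPrimes R (F ⧸ U), P ≠ ⊥ ∧ P ∈ associatedPrimes R (F ⧸ N) := by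
    intro P hP
    obtain ⟨hp, y, hy⟩ := (mem_associatedPrimes_quotient_iff U P).mp hP
    have hyU : y ∉ U := fun h =>
      hp.ne_top ((Ideal.eq_top_iff_one P).mpr ((hy 1).mpr (by rwa [one_smul])))
    have hlt : U < U ⊔ Submodule.span R {y} := by
      refine lt_of_le_of_ne le_sup_left fun h => hyU ?_
      rw [h]
      exact Submodule.mem_sup_right (Submodule.mem_span_singleton_self y)
    have hne : ¬ (U ⊔ Submodule.span R {y}) ⊓ C ≤ N := fun h =>
      hmax _ (le_antisymm h (le_inf (hNU.trans le_sup_left) hNC)) hlt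
    obtain ⟨z, ⟨hz, hzC⟩, hzN⟩ := SetLike.not_le_iff_exists.mp hne
    obtain ⟨u, hu, w, hw, rfl⟩ := Submodule.mem_sup.mp hz
    obtain ⟨r, rfl⟩ := Submodule.mem_span_singleton.mp hw
    have hs : ∀ s : R, s • (u + r • y) ∈ N ↔ s * r ∈ P := fun s => by
      rw [mem_iff _ (C.smul_mem s hzC), hy, smul_add, mul_smul]
      exact U.add_mem_iff_right (U.smul_mem s hu)
    have hr : r ∉ P := fun h => hzN (by simpa using (hs 1).mpr (by simpa using h))
    have hs' : ∀ s : R, s ∈ P ↔ s • (u + r • y) ∈ N := fun s => by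
      rw [hs]
      exact ⟨fun h => P.mul_mem_right r h, fun h => (hp.mem_or_mem h).resolve_right hr⟩
    refine ⟨?_, (mem_associatedPrimes_quotient_iff N P).mpr ⟨hp, _, hs'⟩⟩
    rintro rfl
    obtain ⟨a, ha, haz⟩ := mem_torsionClosure.mp hzC
    exact ha (by simpa using (hs' a).mpr haz)
  refine ⟨C, U, by rw [inf_comm, hU'], hCbot, fun h => (key ⊥ h).1 rfl,
    Set.Subset.antisymm ?_ (Set.union_subset ?_ fun P hP => (key P hP).2)⟩
  · intro P hP
    obtain ⟨hp, x, hx⟩ := (mem_associatedPrimes_quotient_iff N P).mp hP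
    by_cases hP0 : P = ⊥
    · subst hP0
      refine Or.inl ((mem_associatedPrimes_quotient_iff C ⊥).mpr ⟨hp, x, fun r => ?_⟩)
      refine ⟨fun h => hNC ((hx r).mp h), fun h => ?_⟩
      obtain ⟨a, ha, har⟩ := mem_torsionClosure.mp h
      have h0 : a * r = 0 := by simpa using (hx (a * r)).mpr (by rwa [mul_smul])
      simpa [ha] using h0
    · obtain ⟨a, haP, ha⟩ := Submodule.exists_mem_ne_zero_of_ne_bot hP0
      have hxC : x ∈ C := ⟨a, ha, (hx a).mp haP⟩
      exact Or.inr ((mem_associatedPrimes_quotient_iff U P).mpr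
        ⟨hp, x, fun r => by rw [hx, mem_iff _ (C.smul_mem r hxC)]⟩)
  · intro P hP
    obtain rfl : P = ⊥ := hCbot hP
    obtain ⟨hp, x, hx⟩ := (mem_associatedPrimes_quotient_iff C ⊥).mp hP
    refine (mem_associatedPrimes_quotient_iff N ⊥).mpr ⟨hp, x, fun r => ⟨fun h => ?_, fun h =>
      (hx r).mpr (hNC h)⟩⟩
    rw [(Submodule.mem_bot R).mp h, zero_smul]
    exact N.zero_mem

/-- If `(0)` is not an associated prime of `F ⧸ U`, then `F ⧸ U` is torsion. -/
lemma exists_smul_mem_of_bot_notMem {R F : Type*} [CommRing R] [IsDomain R] [IsNoetherianRing R]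
    [AddCommGroup F] [Module R F] {U : Submodule R F}
    (h : ⊥ ∉ associatedPrimes R (F ⧸ U)) (y : F) : ∃ r : R, r ≠ 0 ∧ r • y ∈ U := by
  by_contra! hy
  refine h ((mem_associatedPrimes_quotient_iff U ⊥).mpr ⟨Ideal.isPrime_bot, y, fun r => ?_⟩)
  refine ⟨fun hr => ?_, fun hr => by_contra fun hr0 => hy r hr0 hr⟩
  rw [(Submodule.mem_bot R).mp hr, zero_smul]
  exact U.zero_mem

/-- If `v` is in the kernel of `B`, then pairing with `v` vanishes on the row module of `B`. Each
standard basis vector has a nonzero multiple in that row module, so each coordinate of `v`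
vanishes. -/
lemma ker_mulVecLin_eq_bot_of_torsion {R : Type*} [CommRing R] [IsDomain R] {m k : ℕ}
    (B : Matrix (Fin m) (Fin k) R)
    (h : ∀ y : Fin k → R, ∃ r : R, r ≠ 0 ∧
      r • y ∈ Submodule.span R (Set.range (fun i j => B i j))) :
    LinearMap.ker B.mulVecLin = ⊥ := by
  refine (Submodule.eq_bot_iff _).mpr fun v hv => ?_
  have hv' : B.mulVec v = 0 := by simpa using hv
  have hspan : ∀ w ∈ Submodule.span R (Set.range (fun i j => B i j)), w ⬝ᵥ v = 0 := by
    intro w hw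
    induction hw using Submodule.span_induction with
    | mem x hx =>
      obtain ⟨i, rfl⟩ := hx
      exact congrFun hv' i
    | zero => exact zero_dotProduct v
    | add x y _ _ hx hy => rw [add_dotProduct, hx, hy, add_zero]
    | smul a x _ hx => rw [smul_dotProduct, hx, smul_zero]
  funext j
  obtain ⟨r, hr, hmem⟩ := h (Pi.single j 1)
  have h0 : r * v j = 0 := by simpa [smul_dotProduct] using hspan _ hmem
  simpa [hr] using h0

lemma exists_matrix_span_rows_eq {R : Type*} [CommRing R] [IsNoetherianRing R] {k : ℕ}
    (U : Submodule R (Fin k → R)) :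
    ∃ (m : ℕ) (B : Matrix (Fin m) (Fin k) R),
      Submodule.span R (Set.range (fun i j => B i j)) = U :=
  Submodule.fg_iff_exists_fin_generating_family.mp (IsNoetherian.noetherian U)

/-- Every polynomial matrix `A` over `R = ℂ[x₁,…,xₙ]` admits a
controllable–uncontrollable decomposition: there are polynomial matrices `A_c`,
`A_u` such that (i) `im_R A^⊤ = im_R A_c^⊤ ∩ im_R A_u^⊤`; (ii) `R^k/im_R A_c^⊤`
is `(0)`-primary or trivial; (iii) `(0)` is not an associated prime of
`R^k/im_R A_u^⊤`; (iv) `ker_R A_u = {0}`; (v) `Ass(R^k/im_R A^⊤)` is the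
disjoint union of the associated primes of the two parts. -/
theorem exists_controllable_uncontrollable_decomposition
    {n l k : ℕ} (hn : 0 < n)
    (A : Matrix (Fin l) (Fin k) (MvPolynomial (Fin n) ℂ)) :
    ∃ (lc lu : ℕ) (Ac : Matrix (Fin lc) (Fin k) (MvPolynomial (Fin n) ℂ))
      (Au : Matrix (Fin lu) (Fin k) (MvPolynomial (Fin n) ℂ)),
      -- (i)
      Submodule.span (MvPolynomial (Fin n) ℂ) (Set.range (fun i j => A i j))
        = Submodule.span (MvPolynomial (Fin n) ℂ) (Set.range (fun i j => Ac i j))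
          ⊓ Submodule.span (MvPolynomial (Fin n) ℂ) (Set.range (fun i j => Au i j)) ∧
      -- (ii)
      associatedPrimes (MvPolynomial (Fin n) ℂ)
        ((Fin k → MvPolynomial (Fin n) ℂ) ⧸
          Submodule.span (MvPolynomial (Fin n) ℂ) (Set.range (fun i j => Ac i j))) ⊆ {⊥} ∧
      -- (iii)
      (⊥ : Ideal (MvPolynomial (Fin n) ℂ)) ∉ associatedPrimes (MvPolynomial (Fin n) ℂ)
        ((Fin k → MvPolynomial (Fin n) ℂ) ⧸
          Submodule.span (MvPolynomial (Fin n) ℂ) (Set.range (fun i j => Au i j))) ∧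
      -- (iv)
      LinearMap.ker Au.mulVecLin = ⊥ ∧
      -- (v)
      associatedPrimes (MvPolynomial (Fin n) ℂ)
          ((Fin k → MvPolynomial (Fin n) ℂ) ⧸
            Submodule.span (MvPolynomial (Fin n) ℂ) (Set.range (fun i j => A i j)))
        = associatedPrimes (MvPolynomial (Fin n) ℂ)
            ((Fin k → MvPolynomial (Fin n) ℂ) ⧸
              Submodule.span (MvPolynomial (Fin n) ℂ) (Set.range (fun i j => Ac i j)))
          ∪ associatedPrimes (MvPolynomial (Fin n) ℂ)
            ((Fin k → MvPolynomial (Fin n) ℂ) ⧸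
              Submodule.span (MvPolynomial (Fin n) ℂ) (Set.range (fun i j => Au i j))) ∧
      Disjoint
        (associatedPrimes (MvPolynomial (Fin n) ℂ)
          ((Fin k → MvPolynomial (Fin n) ℂ) ⧸
            Submodule.span (MvPolynomial (Fin n) ℂ) (Set.range (fun i j => Ac i j))))
        (associatedPrimes (MvPolynomial (Fin n) ℂ)
          ((Fin k → MvPolynomial (Fin n) ℂ) ⧸
            Submodule.span (MvPolynomial (Fin n) ℂ) (Set.range (fun i j => Au i j)))) := by
  obtain ⟨C, U, hN, hC, hU, hass⟩ := exists_torsion_splitting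
    (Submodule.span (MvPolynomial (Fin n) ℂ) (Set.range (fun i j => A i j)))
  obtain ⟨lc, Ac, rfl⟩ := exists_matrix_span_rows_eq C
  obtain ⟨lu, Au, rfl⟩ := exists_matrix_span_rows_eq U
  refine ⟨lc, lu, Ac, Au, hN, hC, hU, ?_, hass, ?_⟩
  · exact ker_mulVecLin_eq_bot_of_torsion Au (exists_smul_mem_of_bot_notMem hU)
  · exact (Set.disjoint_singleton_left.mpr hU).mono_left hC
end
end
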